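/- arXiv:1505.06143 — 4 statements merged into one kernel-verified Lean document; each statement's English description precedes it below -/
import Mathlib

section
/- Let Ω ⊂ ℝ³ be a bounded domain with smooth boundary. Suppose Q₁ and Q₂ are smooth maps from Ω̄ × [0,∞) into S₀, both satisfying |Qᵢ(x,t)| ≤ √(2/3)·B/(3C) for all (x,t), and both solving the gradient flow system γ ∂ₜQ = L ΔQ − A Q + B(Q² − (tr Q²/3) I) − C (tr Q²) Q on Ω × (0,∞). If Q₁ = Q₂ on ∂Ω × [0,∞) and Q₁(·,0) = Q₂(·,0) on Ω, then Q₁(x,t) = Q₂(x,t) for all x ∈ Ω and all t ≥ 0. -/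
/-! The argument is a maximum principle for `v = |Q₁ - Q₂|²`, which needs no regularity of `∂Ω`.
On `S₀`-valued maps of bounded size the reaction term is one-sided Lipschitz:
`(P - Q) : (bulk P - bulk Q) ≤ K |P - Q|²` (`bulk_oneSided_lipschitz`), the cubic term being
monotone. Let `exp (-λ t) v` attain its maximum over the compact set `closure Ω × [0, T]` at
`(x₀, t₀)`, with `γ λ > 2 K`. If the maximum were positive, the boundary and initial conditions
would force `x₀ ∈ Ω` and `t₀ > 0`. There the time derivative gives `λ v ≤ ∂ₜ v`
(`time_deriv_at_max`), and the second-derivative test along each axis gives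
`(Q₁ - Q₂) : Δ(Q₁ - Q₂) ≤ 0` (`sum_mul_deriv2_nonpos`). Inserted in the equation these yield
`γ λ v ≤ 2 K v`, a contradiction. -/

noncomputable section

open Matrix Set

/-- Partial derivative of a scalar field on `ℝⁿ` along the `k`-th coordinate. -/
def pd {n : ℕ} (k : Fin n) (f : (Fin n → ℝ) → ℝ) (x : Fin n → ℝ) : ℝ :=
  deriv (fun s => f (Function.update x k s)) (x k)

/-- Componentwise spatial Laplacian of a scalar field on `ℝⁿ`. -/
def lap {n : ℕ} (f : (Fin n → ℝ) → ℝ) (x : Fin n → ℝ) : ℝ :=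
  ∑ k : Fin n, pd k (pd k f) x

/-- Squared Frobenius norm of a 3×3 matrix, `|Q|² = Σᵢⱼ Qᵢⱼ²`. -/
def mnormSq (Q : Matrix (Fin 3) (Fin 3) ℝ) : ℝ := ∑ i, ∑ j, (Q i j) ^ 2

/-- The Landau–de Gennes bulk (reaction) term
`−A Q + B (Q² − (tr Q²/3) I) − C (tr Q²) Q`. -/
def bulk (A B C : ℝ) (Q : Matrix (Fin 3) (Fin 3) ℝ) : Matrix (Fin 3) (Fin 3) ℝ :=
  -(A • Q) + B • (Q * Q - (Matrix.trace (Q * Q) / 3) • (1 : Matrix (Fin 3) (Fin 3) ℝ))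
    - (C * Matrix.trace (Q * Q)) • Q

/-! ### One-variable calculus at a maximum -/

lemma deriv2_nonpos_of_isLocalMax {h : ℝ → ℝ} {a : ℝ} (hm : IsLocalMax h a)
    (hc : ContinuousAt h a) : deriv (deriv h) a ≤ 0 := by
  by_contra! hpos
  have hmin := isLocalMin_of_deriv_deriv_pos hpos hm.deriv_eq_zero hc
  -- A point that is both a local minimum and a local maximum has `h` constant around it.
  have heq : h =ᶠ[nhds a] fun _ => h a := by
    filter_upwards [hm, hmin] with y h1 h2 using le_antisymm h1 h2
  have h2 := heq.deriv.deriv_eq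
  simp at h2
  linarith

/-- The second derivative of `|u|²` is `2 u · D²u + 2 |Du|²`, and it is nonpositive at a local
maximum; dropping the square leaves `u · D²u ≤ 0`. -/
lemma sum_mul_deriv2_nonpos {ι : Type*} [Fintype ι] {u : ι → ℝ → ℝ} {a : ℝ}
    (hu : ∀ i, ContDiffAt ℝ 2 (u i) a) (hm : IsLocalMax (fun s => ∑ i, u i s ^ 2) a) :
    ∑ i, u i a * deriv (deriv (u i)) a ≤ 0 := by
  have hd : ∀ᶠ s in nhds a, ∀ i, DifferentiableAt ℝ (u i) s := by
    rw [Filter.eventually_all]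
    intro i
    filter_upwards [(hu i).eventually (by simp)] with s hs
    exact hs.differentiableAt (by simp)
  have hd2 : ∀ i, DifferentiableAt ℝ (deriv (u i)) a := by
    intro i
    have h1 : ContDiffAt ℝ 1 (deriv (u i)) a :=
      ((hu i).fderiv_right (m := 1) (by norm_num)).clm_apply contDiffAt_const
    exact h1.differentiableAt (by simp)
  have h1 : deriv (fun s => ∑ i, u i s ^ 2) =ᶠ[nhds a]
      fun s => ∑ i, 2 * (u i s * deriv (u i) s) := by
    filter_upwards [hd] with s hs
    have : HasDerivAt (fun s => ∑ i, u i s ^ 2) (∑ i, 2 * (u i s * deriv (u i) s)) s := by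
      refine HasDerivAt.fun_sum fun i _ => ?_
      refine ((hs i).hasDerivAt.fun_pow 2).congr_deriv ?_
      push_cast; ring
    exact this.deriv
  have hda := hd.self_of_nhds
  have h2 : HasDerivAt (fun s => ∑ i, 2 * (u i s * deriv (u i) s))
      (∑ i, 2 * (deriv (u i) a * deriv (u i) a + u i a * deriv (deriv (u i)) a)) a := by
    refine HasDerivAt.fun_sum fun i _ => ?_
    exact ((hda i).hasDerivAt.fun_mul (hd2 i).hasDerivAt).const_mul 2
  have h3 : deriv (deriv (fun s => ∑ i, u i s ^ 2)) a ≤ 0 :=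
    deriv2_nonpos_of_isLocalMax hm (by
      have := fun i => (hda i).continuousAt
      fun_prop)
  rw [h1.deriv_eq, h2.deriv, ← Finset.mul_sum, Finset.sum_add_distrib] at h3
  have h4 : 0 ≤ ∑ i, deriv (u i) a * deriv (u i) a :=
    Finset.sum_nonneg fun i _ => mul_self_nonneg _
  linarith

/-- First-order condition in time at a maximum of `exp (-l t) v`; only times before `a` are
used, so the maximum may sit at the final time `T`. -/
lemma time_deriv_at_max {v : ℝ → ℝ} {v' l T a : ℝ} (ha : 0 < a) (haT : a ≤ T)
    (hv : HasDerivAt v v' a)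
    (hm : ∀ t ∈ Icc 0 T, Real.exp (-l * t) * v t ≤ Real.exp (-l * a) * v a) :
    l * v a ≤ v' := by
  have hw : HasDerivAt (fun t => Real.exp (-l * t) * v t)
      (Real.exp (-l * a) * (-l) * v a + Real.exp (-l * a) * v') a := by
    have := ((hasDerivAt_id a).const_mul (-l)).exp
    simpa using this.fun_mul hv
  have hmax : IsLocalMaxOn (fun t => Real.exp (-l * t) * v t) (Icc 0 T) a :=
    IsMaxOn.localize hm
  have hcone : (0 - a) ∈ posTangentConeAt (Icc 0 T) a := by
    apply sub_mem_posTangentConeAt_of_segment_subset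
    exact (convex_Icc 0 T).segment_subset ⟨ha.le, haT⟩ ⟨le_rfl, ha.le.trans haT⟩
  have h := hmax.hasFDerivWithinAt_nonpos hw.hasFDerivAt.hasFDerivWithinAt hcone
  have h' : -a * (Real.exp (-l * a) * (v' - l * v a)) ≤ 0 := by
    simp at h
    simp only [neg_mul] at h ⊢
    linarith
  by_contra! hlt
  have := mul_pos ha (mul_pos (Real.exp_pos (-l * a)) (sub_pos.2 hlt))
  linarith

/-- The second partial derivative is the second derivative of the
restriction to a coordinate line. -/
lemma pd_pd {n : ℕ} (k : Fin n) (f : (Fin n → ℝ) → ℝ) (x : Fin n → ℝ) :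
    pd k (pd k f) x = deriv (deriv fun s => f (Function.update x k s)) (x k) := by
  unfold pd
  simp

/-! ### The reaction term is one-sided Lipschitz -/

lemma abs_mul_mul_le {a b c M : ℝ} (h : |b| ≤ M) : a * b * c ≤ M * ((a ^ 2 + c ^ 2) / 2) := by
  have h1 : a * b * c ≤ |b| * (|a| * |c|) := by
    refine (le_abs_self _).trans (le_of_eq ?_)
    rw [abs_mul, abs_mul]; ring
  have h2 : |a| * |c| ≤ (a ^ 2 + c ^ 2) / 2 := by
    nlinarith [sq_nonneg (|a| - |c|), sq_abs a, sq_abs c]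
  have h3 : 0 ≤ |a| * |c| := by positivity
  calc _ ≤ _ := h1
    _ ≤ M * (|a| * |c|) := by gcongr
    _ ≤ _ := by
      have : 0 ≤ M := (abs_nonneg b).trans h
      gcongr

/-- The quadratic part of the reaction term, using `P² - Q² = P (P - Q) + (P - Q) Q`. -/
lemma quadratic_bound {M : ℝ} {P Q : Matrix (Fin 3) (Fin 3) ℝ}
    (hP : ∀ i j, |P i j| ≤ M) (hQ : ∀ i j, |Q i j| ≤ M) :
    ∑ i, ∑ j, (P i j - Q i j) * ((P * P) i j - (Q * Q) i j) ≤ 6 * M * mnormSq (P - Q) := by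
  have h : ∀ i j, (P i j - Q i j) * ((P * P) i j - (Q * Q) i j) ≤
      ∑ k, (M * (((P i j - Q i j) ^ 2 + (P k j - Q k j) ^ 2) / 2) +
        M * (((P i j - Q i j) ^ 2 + (P i k - Q i k) ^ 2) / 2)) := by
    intro i j
    rw [Matrix.mul_apply, Matrix.mul_apply, ← Finset.sum_sub_distrib, Finset.mul_sum]
    refine Finset.sum_le_sum fun k _ => ?_
    have h1 := abs_mul_mul_le (a := P i j - Q i j) (c := P k j - Q k j) (hP i k)
    have h2 := abs_mul_mul_le (a := P i j - Q i j) (c := P i k - Q i k) (hQ k j)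
    linarith
  refine (Finset.sum_le_sum fun i _ => Finset.sum_le_sum fun j _ => h i j).trans (le_of_eq ?_)
  simp only [mnormSq, Fin.sum_univ_three, Matrix.sub_apply]
  ring

/-- The cubic part of the reaction term is monotone: it is the gradient of the convex function
`|Q|⁴ / 4`. -/
lemma cubic_monotone (P Q : Matrix (Fin 3) (Fin 3) ℝ) :
    0 ≤ ∑ i, ∑ j, (P i j - Q i j) * (mnormSq P * P i j - mnormSq Q * Q i j) := by
  have h0 : ∑ i, ∑ j, (P i j - Q i j) * (mnormSq P * P i j - mnormSq Q * Q i j) =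
      ((mnormSq P + mnormSq Q) * mnormSq (P - Q) + (mnormSq P - mnormSq Q) ^ 2) / 2 := by
    have hp : mnormSq P = ∑ i, ∑ j, (P i j) ^ 2 := rfl
    have hq : mnormSq Q = ∑ i, ∑ j, (Q i j) ^ 2 := rfl
    generalize mnormSq P = p at *
    generalize mnormSq Q = q at *
    simp only [mnormSq, Fin.sum_univ_three, Matrix.sub_apply] at *
    linear_combination (q - p) / 2 * hp + (p - q) / 2 * hq
  rw [h0]
  have h : ∀ R : Matrix (Fin 3) (Fin 3) ℝ, 0 ≤ mnormSq R := fun R => by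
    unfold mnormSq; positivity
  have := h P
  have := h Q
  have := h (P - Q)
  positivity

lemma trace_sq_of_symm {Q : Matrix (Fin 3) (Fin 3) ℝ} (h : Qᵀ = Q) :
    Matrix.trace (Q * Q) = mnormSq Q := by
  simp only [Matrix.trace, Matrix.diag, Matrix.mul_apply, mnormSq]
  refine Finset.sum_congr rfl fun i _ => Finset.sum_congr rfl fun j _ => ?_
  rw [show Q j i = Q i j from congrFun (congrFun h i) j]
  ring

/-- The one-sided Lipschitz bound for the reaction term; `M` bounds the entries. The linear and
cubic terms only help, so the constant comes from the quadratic one. -/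
lemma bulk_oneSided_lipschitz {A B C M : ℝ} (hA : 0 ≤ A) (hB : 0 ≤ B) (hC : 0 ≤ C)
    {P Q : Matrix (Fin 3) (Fin 3) ℝ} (hPs : Pᵀ = P) (hQs : Qᵀ = Q)
    (hPt : Matrix.trace P = 0) (hQt : Matrix.trace Q = 0)
    (hP : ∀ i j, |P i j| ≤ M) (hQ : ∀ i j, |Q i j| ≤ M) :
    ∑ i, ∑ j, (P i j - Q i j) * (bulk A B C P i j - bulk A B C Q i j)
      ≤ 6 * B * M * mnormSq (P - Q) := by
  have h1 := mul_le_mul_of_nonneg_left (quadratic_bound hP hQ) hB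
  have h2 := mul_nonneg hC (cubic_monotone P Q)
  have h3 : 0 ≤ A * mnormSq (P - Q) := mul_nonneg hA (by unfold mnormSq; positivity)
  -- The multiple of the identity contributes nothing, since `P - Q` is traceless.
  have h4 : ∑ i, ∑ j, (P i j - Q i j) * (bulk A B C P i j - bulk A B C Q i j) =
      -(A * mnormSq (P - Q)) +
      B * (∑ i, ∑ j, (P i j - Q i j) * ((P * P) i j - (Q * Q) i j)) -
      C * (∑ i, ∑ j, (P i j - Q i j) * (mnormSq P * P i j - mnormSq Q * Q i j)) := by
    unfold bulk
    rw [trace_sq_of_symm hPs, trace_sq_of_symm hQs]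
    have hd : mnormSq (P - Q) = ∑ i, ∑ j, (P i j - Q i j) ^ 2 := rfl
    rw [hd]
    generalize P * P = P2
    generalize Q * Q = Q2
    generalize mnormSq P = p
    generalize mnormSq Q = q
    rw [Matrix.trace_fin_three] at hPt hQt
    simp [Fin.sum_univ_three, Matrix.one_apply]
    linear_combination (-B * (p - q) / 3) * (hPt - hQt)
  rw [h4]
  linarith

lemma abs_entry_le {Q : Matrix (Fin 3) (Fin 3) ℝ} {M : ℝ} (h : Real.sqrt (mnormSq Q) ≤ M)
    (i j : Fin 3) : |Q i j| ≤ M := by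
  refine le_trans (Real.abs_le_sqrt ?_) h
  unfold mnormSq
  calc (Q i j) ^ 2 ≤ ∑ j, (Q i j) ^ 2 :=
        Finset.single_le_sum (f := fun j => (Q i j) ^ 2) (fun _ _ => sq_nonneg _)
          (Finset.mem_univ j)
    _ ≤ _ := Finset.single_le_sum (f := fun i => ∑ j, (Q i j) ^ 2)
          (fun _ _ => Finset.sum_nonneg fun _ _ => sq_nonneg _) (Finset.mem_univ i)

/-! ### The maximum principle -/

/-- uniqueness of solutions of the Landau–de Gennes gradient flow
`γ ∂ₜQ = L ΔQ − A Q + B(Q² − (tr Q²/3) I) − C (tr Q²) Q`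
on a bounded domain `Ω ⊂ ℝ³`, with equal Dirichlet boundary data and equal
initial data, among `S₀`-valued solutions obeying the bound
`|Q(x,t)| ≤ √(2/3)·B/(3C)`. -/
theorem gradient_flow_uniqueness
    (Ω : Set (Fin 3 → ℝ)) (hΩ_open : IsOpen Ω) (hΩ_bdd : Bornology.IsBounded Ω)
    (L B C γ A : ℝ) (hL : 0 < L) (hB : 0 < B) (hC : 0 < C) (hγ : 0 < γ)
    (hA : A = B ^ 2 / (27 * C))
    (Q₁ Q₂ : (Fin 3 → ℝ) → ℝ → Matrix (Fin 3) (Fin 3) ℝ)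
    (hS₀ : ∀ Q ∈ ({Q₁, Q₂} : Set ((Fin 3 → ℝ) → ℝ → Matrix (Fin 3) (Fin 3) ℝ)),
      ∀ x ∈ closure Ω, ∀ t : ℝ, 0 ≤ t →
        ((Q x t)ᵀ = Q x t ∧ Matrix.trace (Q x t) = 0))
    (hsmooth : ∀ Q ∈ ({Q₁, Q₂} : Set ((Fin 3 → ℝ) → ℝ → Matrix (Fin 3) (Fin 3) ℝ)),
      ∀ i j : Fin 3,
        ContDiffOn ℝ (⊤ : ℕ∞) (fun p : (Fin 3 → ℝ) × ℝ => Q p.1 p.2 i j)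
          (closure Ω ×ˢ Ici (0 : ℝ)))
    (hbound : ∀ Q ∈ ({Q₁, Q₂} : Set ((Fin 3 → ℝ) → ℝ → Matrix (Fin 3) (Fin 3) ℝ)),
      ∀ x ∈ closure Ω, ∀ t : ℝ, 0 ≤ t →
        Real.sqrt (mnormSq (Q x t)) ≤ Real.sqrt (2 / 3) * B / (3 * C))
    (hpde : ∀ Q ∈ ({Q₁, Q₂} : Set ((Fin 3 → ℝ) → ℝ → Matrix (Fin 3) (Fin 3) ℝ)),
      ∀ x ∈ Ω, ∀ t : ℝ, 0 < t → ∀ i j : Fin 3,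
        γ * deriv (fun s => Q x s i j) t
          = L * lap (fun y => Q y t i j) x + bulk A B C (Q x t) i j)
    (hbc : ∀ x ∈ frontier Ω, ∀ t : ℝ, 0 ≤ t → Q₁ x t = Q₂ x t)
    (hic : ∀ x ∈ Ω, Q₁ x 0 = Q₂ x 0) :
    ∀ x ∈ Ω, ∀ t : ℝ, 0 ≤ t → Q₁ x t = Q₂ x t := by
  have m₁ : Q₁ ∈ ({Q₁, Q₂} : Set ((Fin 3 → ℝ) → ℝ → Matrix (Fin 3) (Fin 3) ℝ)) := by simp
  have m₂ : Q₂ ∈ ({Q₁, Q₂} : Set ((Fin 3 → ℝ) → ℝ → Matrix (Fin 3) (Fin 3) ℝ)) := by simp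
  intro x hx T hT
  set v : (Fin 3 → ℝ) → ℝ → ℝ := fun y t =>
    ∑ p : Fin 3 × Fin 3, (Q₁ y t p.1 p.2 - Q₂ y t p.1 p.2) ^ 2 with hv
  have hv_norm : ∀ y t, mnormSq (Q₁ y t - Q₂ y t) = v y t := fun y t => by
    simp only [hv, mnormSq, Matrix.sub_apply, Fintype.sum_prod_type]
  have hv_zero : ∀ y t, Q₁ y t = Q₂ y t → v y t = 0 := fun y t h => by simp [hv, h]
  have hv_nonneg : ∀ y t, 0 ≤ v y t := fun y t => by simp only [hv]; positivity
  set M : ℝ := Real.sqrt (2 / 3) * B / (3 * C) with hM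
  set l : ℝ := (2 * (6 * B * M) + 1) / γ with hl
  -- The weighted difference attains its maximum on the closed space-time cylinder.
  have hcont : ContinuousOn (fun p : (Fin 3 → ℝ) × ℝ => Real.exp (-l * p.2) * v p.1 p.2)
      (closure Ω ×ˢ Icc 0 T) := by
    have hsub : closure Ω ×ˢ Icc 0 T ⊆ closure Ω ×ˢ Ici (0 : ℝ) :=
      prod_mono Subset.rfl Icc_subset_Ici_self
    have c₁ := fun i j => (hsmooth Q₁ m₁ i j).continuousOn.mono hsub
    have c₂ := fun i j => (hsmooth Q₂ m₂ i j).continuousOn.mono hsub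
    refine ContinuousOn.mul (by fun_prop) ?_
    exact continuousOn_finsetSum _ fun p _ => ((c₁ p.1 p.2).sub (c₂ p.1 p.2)).pow 2
  obtain ⟨⟨x₀, t₀⟩, ⟨hx₀, ht₀⟩, hmax⟩ :=
    (hΩ_bdd.isCompact_closure.prod isCompact_Icc).exists_isMaxOn
      ⟨(x, T), subset_closure hx, hT, le_rfl⟩ hcont
  have hmax' : ∀ y ∈ closure Ω, ∀ t ∈ Icc 0 T,
      Real.exp (-l * t) * v y t ≤ Real.exp (-l * t₀) * v x₀ t₀ :=
    fun y hy t ht => hmax (show (y, t) ∈ closure Ω ×ˢ Icc 0 T from ⟨hy, ht⟩)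
  simp only at hx₀ ht₀
  suffices h0 : v x₀ t₀ = 0 by
    have h1 := hmax' x (subset_closure hx) T ⟨hT, le_rfl⟩
    rw [h0, mul_zero] at h1
    have h2 : v x T = 0 :=
      le_antisymm (nonpos_of_mul_nonpos_right h1 (Real.exp_pos _)) (hv_nonneg x T)
    ext i j
    have h3 := (Finset.sum_eq_zero_iff_of_nonneg (fun _ _ => sq_nonneg _)).1 h2 (i, j)
      (Finset.mem_univ _)
    exact sub_eq_zero.1 (pow_eq_zero_iff two_ne_zero |>.1 h3)
  by_contra hne
  have hpos : 0 < v x₀ t₀ := lt_of_le_of_ne (hv_nonneg _ _) (Ne.symm hne)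
  -- A positive maximum lies off the parabolic boundary.
  have hx₀Ω : x₀ ∈ Ω := by
    by_contra h
    exact hne (hv_zero _ _ (hbc x₀ (by rw [hΩ_open.frontier_eq]; exact ⟨hx₀, h⟩) t₀ ht₀.1))
  have ht₀pos : 0 < t₀ := by
    refine lt_of_le_of_ne ht₀.1 fun h => hne (hv_zero _ _ ?_)
    rw [← h]
    exact hic x₀ hx₀Ω
  have hnhds : closure Ω ×ˢ Ici (0 : ℝ) ∈ nhds (x₀, t₀) :=
    prod_mem_nhds (Filter.mem_of_superset (hΩ_open.mem_nhds hx₀Ω) subset_closure)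
      (Ici_mem_nhds ht₀pos)
  have s₁ := fun i j => (hsmooth Q₁ m₁ i j).contDiffAt hnhds
  have s₂ := fun i j => (hsmooth Q₂ m₂ i j).contDiffAt hnhds
  have time : ∀ {f : (Fin 3 → ℝ) → ℝ → ℝ},
      ContDiffAt ℝ (⊤ : ℕ∞) (fun p : (Fin 3 → ℝ) × ℝ => f p.1 p.2) (x₀, t₀) →
      DifferentiableAt ℝ (fun s => f x₀ s) t₀ := by
    intro f hf
    have h1 : DifferentiableAt ℝ (fun p : (Fin 3 → ℝ) × ℝ => f p.1 p.2) (x₀, t₀) :=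
      hf.differentiableAt (by simp)
    exact h1.comp t₀ (f := fun s => (x₀, s)) (by fun_prop)
  have space : ∀ {f : (Fin 3 → ℝ) → ℝ → ℝ},
      ContDiffAt ℝ (⊤ : ℕ∞) (fun p : (Fin 3 → ℝ) × ℝ => f p.1 p.2) (x₀, t₀) →
      ∀ k, ContDiffAt ℝ 2 (fun s => f (Function.update x₀ k s) t₀) (x₀ k) := by
    intro f hf k
    have h1 : ContDiffAt ℝ 2 (fun p : (Fin 3 → ℝ) × ℝ => f p.1 p.2)
        (Function.update x₀ k (x₀ k), t₀) := by
      rw [Function.update_eq_self]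
      exact hf.of_le (WithTop.coe_le_coe.2 le_top)
    exact h1.comp (x₀ k) (f := fun s => (Function.update x₀ k s, t₀))
      ((contDiff_update 2 x₀ k).contDiffAt.prodMk contDiffAt_const)
  have ht : l * v x₀ t₀ ≤ ∑ p : Fin 3 × Fin 3, 2 * ((Q₁ x₀ t₀ p.1 p.2 - Q₂ x₀ t₀ p.1 p.2) *
      (deriv (fun s => Q₁ x₀ s p.1 p.2) t₀ - deriv (fun s => Q₂ x₀ s p.1 p.2) t₀)) := by
    refine time_deriv_at_max (v := v x₀) ht₀pos ht₀.2 ?_ fun t ht => hmax' x₀ hx₀ t ht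
    refine HasDerivAt.fun_sum fun p _ => ?_
    refine (((time (f := fun y t => Q₁ y t p.1 p.2) (s₁ p.1 p.2)).hasDerivAt.fun_sub
      (time (f := fun y t => Q₂ y t p.1 p.2) (s₂ p.1 p.2)).hasDerivAt).fun_pow 2).congr_deriv ?_
    push_cast; ring
  have hlap : ∑ p : Fin 3 × Fin 3, (Q₁ x₀ t₀ p.1 p.2 - Q₂ x₀ t₀ p.1 p.2) *
      (lap (fun y => Q₁ y t₀ p.1 p.2) x₀ - lap (fun y => Q₂ y t₀ p.1 p.2) x₀) ≤ 0 := by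
    simp only [lap, pd_pd, ← Finset.sum_sub_distrib, Finset.mul_sum]
    rw [Finset.sum_comm]
    refine Finset.sum_nonpos fun k _ => ?_
    have c₁ := fun p : Fin 3 × Fin 3 => space (f := fun y t => Q₁ y t p.1 p.2) (s₁ p.1 p.2) k
    have c₂ := fun p : Fin 3 × Fin 3 => space (f := fun y t => Q₂ y t p.1 p.2) (s₂ p.1 p.2) k
    have hloc : IsLocalMax (fun s => ∑ p : Fin 3 × Fin 3,
        (Q₁ (Function.update x₀ k s) t₀ p.1 p.2 - Q₂ (Function.update x₀ k s) t₀ p.1 p.2) ^ 2)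
        (x₀ k) := by
      have hcu : ContinuousAt (fun s => Function.update x₀ k s) (x₀ k) := by fun_prop
      have hev : ∀ᶠ s in nhds (x₀ k), Function.update x₀ k s ∈ Ω :=
        hcu.eventually_mem (by simpa using hΩ_open.mem_nhds hx₀Ω)
      filter_upwards [hev] with s hs
      rw [Function.update_eq_self]
      exact le_of_mul_le_mul_left (hmax' _ (subset_closure hs) t₀ ht₀) (Real.exp_pos _)
    have h := sum_mul_deriv2_nonpos (fun p => (c₁ p).sub (c₂ p)) hloc
    refine (Finset.sum_congr rfl fun p _ => ?_).trans_le h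
    have hdd := iteratedDeriv_fun_sub (c₁ p) (c₂ p)
    simp only [iteratedDeriv_succ, iteratedDeriv_zero] at hdd
    rw [Function.update_eq_self]
    exact congrArg _ hdd.symm
  have hM0 : 0 ≤ M := by positivity
  have hA0 : 0 ≤ A := by rw [hA]; positivity
  have hbulk := bulk_oneSided_lipschitz hA0 hB.le hC.le
    (hS₀ Q₁ m₁ x₀ hx₀ t₀ ht₀.1).1 (hS₀ Q₂ m₂ x₀ hx₀ t₀ ht₀.1).1
    (hS₀ Q₁ m₁ x₀ hx₀ t₀ ht₀.1).2 (hS₀ Q₂ m₂ x₀ hx₀ t₀ ht₀.1).2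
    (abs_entry_le (hbound Q₁ m₁ x₀ hx₀ t₀ ht₀.1)) (abs_entry_le (hbound Q₂ m₂ x₀ hx₀ t₀ ht₀.1))
  rw [hv_norm, ← Fintype.sum_prod_type' (f := fun i j => (Q₁ x₀ t₀ i j - Q₂ x₀ t₀ i j) *
    (bulk A B C (Q₁ x₀ t₀) i j - bulk A B C (Q₂ x₀ t₀) i j))] at hbulk
  have hkey : γ * ∑ p : Fin 3 × Fin 3, 2 * ((Q₁ x₀ t₀ p.1 p.2 - Q₂ x₀ t₀ p.1 p.2) *
      (deriv (fun s => Q₁ x₀ s p.1 p.2) t₀ - deriv (fun s => Q₂ x₀ s p.1 p.2) t₀)) =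
      2 * L * (∑ p : Fin 3 × Fin 3, (Q₁ x₀ t₀ p.1 p.2 - Q₂ x₀ t₀ p.1 p.2) *
        (lap (fun y => Q₁ y t₀ p.1 p.2) x₀ - lap (fun y => Q₂ y t₀ p.1 p.2) x₀)) +
      2 * ∑ p : Fin 3 × Fin 3, (Q₁ x₀ t₀ p.1 p.2 - Q₂ x₀ t₀ p.1 p.2) *
        (bulk A B C (Q₁ x₀ t₀) p.1 p.2 - bulk A B C (Q₂ x₀ t₀) p.1 p.2) := by
    rw [Finset.mul_sum, Finset.mul_sum, Finset.mul_sum, ← Finset.sum_add_distrib]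
    refine Finset.sum_congr rfl fun p _ => ?_
    linear_combination 2 * (Q₁ x₀ t₀ p.1 p.2 - Q₂ x₀ t₀ p.1 p.2) *
      (hpde Q₁ m₁ x₀ hx₀Ω t₀ ht₀pos p.1 p.2 - hpde Q₂ m₂ x₀ hx₀Ω t₀ ht₀pos p.1 p.2)
  have hγl : γ * (l * v x₀ t₀) = (2 * (6 * B * M) + 1) * v x₀ t₀ := by
    rw [hl]; field_simp
  have h1 := mul_le_mul_of_nonneg_left ht hγ.le
  rw [hkey, hγl] at h1
  have h2 := mul_nonpos_of_nonneg_of_nonpos (by positivity : 0 ≤ 2 * L) hlap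
  linarith
end
end

section
/- Define σ(R) = h₊ / (1 + exp(−√3 h₊ R)) and, for L̄ > 0 small, define w : [−ρ(0), 1−ρ(0)] → ℝ piecewise by: w(R) = h₊ for R > 2L̄^{1/4}; w(R) = (h₊ − σ(L̄^{−1/4}))·(R − 2L̄^{1/4})/L̄^{1/4} + h₊ for L̄^{1/4} ≤ R ≤ 2L̄^{1/4}; w(R) = σ(R/√L̄) for −L̄^{1/4} ≤ R ≤ L̄^{1/4}; w(R) = σ(−L̄^{−1/4})·(R + 2L̄^{1/4})/L̄^{1/4} for −2L̄^{1/4} ≤ R ≤ −L̄^{1/4}; and w(R) = 0 for R < −2L̄^{1/4}. Then there exists a constant C > 0 independent of L̄ such that, for all sufficiently small L̄ > 0, E_φ[w] ≤ g(h₊) + C L̄^{1/4}, where E_φ is the weighted energy at τ = 0 (so ρ = r₀). -/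
/-!
Put `ε = L̄^{1/4}`, so that `√L̄ = ε²`, and write `h = h₊`.

The profile solves `σ' = √3 σ (h - σ)`.  Hence on the core `|R| < ε`, where `w(R) = σ(R/ε²)`, the
gradient and potential terms are equal, and their sum `2 σ² (h - σ)² / ε²` is the derivative of
`R ↦ g(σ(R/ε²))` (`hasDerivAt_wellPrimitive_profile`).  Since `0 ≤ φ ≤ 1`, the core contributes at
most `g(h)`.

On the ramps `ε < |R| < 2ε` the profile has already relaxed: `σ(-1/ε) = h - σ(1/ε) ≤ ε`
(`profile_tail_le`), so that `|w_R| ≤ 1` and `w² (h - w)² ≤ h² ε²`.  The local energy density is thus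
bounded, and the ramps contribute `O(ε)`.  Outside `|R| ≤ 2ε` both terms vanish.  Finally
`φ / (R + r₀)²` is bounded, so the curvature term contributes `O(ε²)`.

These bounds are assembled into one integrable majorant of the energy density valid almost
everywhere (`energyDensity_le`).  The energy density being nonnegative, no separate argument for its
integrability is needed to compare the integrals.
-/

noncomputable section

open Set

open MeasureTheory Filter Topology

/-! ### The profile and its energy -/

/-- The heteroclinic profile `σ(R) = h / (1 + exp(-√3 h R))`. -/
def profile (h R : ℝ) : ℝ := h / (1 + Real.exp (-(Real.sqrt 3) * h * R))

/-- The energy function `g(s) = (2/√3) ∫₀ˢ u (h - u) du`, in closed form. -/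
def wellPrimitive (h s : ℝ) : ℝ := 2 / Real.sqrt 3 * (h * s ^ 2 / 2 - s ^ 3 / 3)

/-- The majorant of the energy density: the derivative of `R ↦ g(σ(R/ε²))`, a constant for the
curvature term, and a constant on `[-2ε, 2ε]` for the ramps. -/
def majorant (h r₀ ε R : ℝ) : ℝ :=
  2 * profile h (R / ε ^ 2) ^ 2 * (h - profile h (R / ε ^ 2)) ^ 2 / ε ^ 2
    + 2 * h ^ 2 * Real.exp 2 / r₀ ^ 2 * ε ^ 2
    + (Icc (-2 * ε) (2 * ε)).indicator (fun _ => 1 + h ^ 2) R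

/-- The piecewise initial condition, with `ε = L̄^{1/4}`. -/
def ramp (h ε R : ℝ) : ℝ :=
  if R < -2 * ε then 0
  else if R < -ε then profile h (-(1 / ε)) * (R + 2 * ε) / ε
  else if R ≤ ε then profile h (R / ε ^ 2)
  else if R ≤ 2 * ε then (h - profile h (1 / ε)) * (R - 2 * ε) / ε + h
  else h

lemma profile_pos {h : ℝ} (hh : 0 < h) (R : ℝ) : 0 < profile h R := by
  unfold profile; positivity

lemma profile_le {h : ℝ} (hh : 0 < h) (R : ℝ) : profile h R ≤ h := by
  unfold profile
  exact div_le_self hh.le (by linarith [Real.exp_pos (-(Real.sqrt 3) * h * R)])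

lemma hasDerivAt_profile (h R : ℝ) :
    HasDerivAt (profile h) (Real.sqrt 3 * profile h R * (h - profile h R)) R := by
  have hpos : 0 < 1 + Real.exp (-(Real.sqrt 3) * h * R) := by positivity
  have h1 : HasDerivAt (fun R : ℝ => -(Real.sqrt 3) * h * R) (-(Real.sqrt 3) * h) R := by
    simpa using (hasDerivAt_id R).const_mul (-(Real.sqrt 3) * h)
  have h2 := (hasDerivAt_const R h).div (h1.exp.const_add 1) hpos.ne'
  refine HasDerivAt.congr_deriv (f := profile h) h2 ?_
  simp only [profile]
  field_simp
  ring

lemma continuous_profile (h : ℝ) : Continuous (profile h) :=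
  continuous_iff_continuousAt.2 fun R => (hasDerivAt_profile h R).continuousAt

lemma sub_profile (h R : ℝ) : h - profile h R = profile h (-R) := by
  unfold profile
  have e : Real.exp (-(Real.sqrt 3) * h * -R) = (Real.exp (-(Real.sqrt 3) * h * R))⁻¹ := by
    rw [← Real.exp_neg]; congr 1; ring
  rw [e]
  have := Real.exp_pos (-(Real.sqrt 3) * h * R)
  field_simp
  ring

/-- The tail is exponentially small in `1/ε`; the bound `exp x ≥ x` is all that is needed. -/
lemma profile_tail_le {h ε : ℝ} (hh : 0 < h) (hε : 0 < ε) : profile h (-(1 / ε)) ≤ ε := by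
  unfold profile
  rw [div_le_iff₀ (by positivity)]
  have h1 := Real.add_one_le_exp (-(Real.sqrt 3) * h * -(1 / ε))
  have h3 : (1 : ℝ) ≤ Real.sqrt 3 := Real.one_le_sqrt.2 (by norm_num)
  have h2 : h ≤ ε * (-(Real.sqrt 3) * h * -(1 / ε)) := by
    have : ε * (-(Real.sqrt 3) * h * -(1 / ε)) = Real.sqrt 3 * h := by field_simp
    rw [this]; nlinarith
  nlinarith

lemma hasDerivAt_profile_div (h ε R : ℝ) :
    HasDerivAt (fun R => profile h (R / ε ^ 2))
      (Real.sqrt 3 * profile h (R / ε ^ 2) * (h - profile h (R / ε ^ 2)) / ε ^ 2) R := by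
  have h1 : HasDerivAt (fun R : ℝ => R / ε ^ 2) (1 / ε ^ 2) R := (hasDerivAt_id R).div_const _
  have := (hasDerivAt_profile h (R / ε ^ 2)).comp R h1
  refine HasDerivAt.congr_deriv (f := fun R => profile h (R / ε ^ 2)) this ?_
  ring

lemma hasDerivAt_wellPrimitive_profile (h ε R : ℝ) :
    HasDerivAt (fun R => wellPrimitive h (profile h (R / ε ^ 2)))
      (2 * profile h (R / ε ^ 2) ^ 2 * (h - profile h (R / ε ^ 2)) ^ 2 / ε ^ 2) R := by
  have h1 := hasDerivAt_profile_div h ε R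
  have h2 := ((((h1.pow 2).const_mul h).div_const 2).sub ((h1.pow 3).div_const 3)).const_mul
    (2 / Real.sqrt 3)
  have h3 : Real.sqrt 3 ≠ 0 := by positivity
  refine HasDerivAt.congr_deriv
    (f := fun R => wellPrimitive h (profile h (R / ε ^ 2))) h2 ?_
  push_cast
  field_simp

lemma wellPrimitive_nonneg {h s : ℝ} (h0 : 0 ≤ s) (h1 : s ≤ h) : 0 ≤ wellPrimitive h s := by
  unfold wellPrimitive
  have : 0 ≤ h * s ^ 2 / 2 - s ^ 3 / 3 := by
    nlinarith [mul_nonneg (sq_nonneg s) (sub_nonneg.2 h1), pow_nonneg h0 3]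
  positivity

lemma wellPrimitive_le {h s : ℝ} (h0 : 0 ≤ s) (h1 : s ≤ h) :
    wellPrimitive h s ≤ h ^ 3 / (3 * Real.sqrt 3) := by
  unfold wellPrimitive
  have h2 : h * s ^ 2 / 2 - s ^ 3 / 3 ≤ h ^ 3 / 6 := by
    -- `h³ - 3hs² + 2s³ = (h - s)² (h + 2s)`
    nlinarith [mul_nonneg (sq_nonneg (h - s)) (by linarith : 0 ≤ h + 2 * s)]
  calc _ ≤ 2 / Real.sqrt 3 * (h ^ 3 / 6) := by gcongr
    _ = _ := by field_simp; ring

/-! ### The weight -/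

lemma weight_le_one {r₀ R : ℝ} (hr : 0 < r₀) (hR : -r₀ ≤ R) :
    Real.exp (-2 * R / r₀) * (1 + R / r₀) ^ 2 ≤ 1 := by
  have h0 : 0 ≤ 1 + R / r₀ := by
    have : -1 ≤ R / r₀ := by rw [le_div_iff₀ hr]; linarith
    linarith
  have e : Real.exp (-2 * R / r₀) * (1 + R / r₀) ^ 2
      = (Real.exp (-(R / r₀)) * (1 + R / r₀)) ^ 2 := by
    rw [mul_pow, ← Real.exp_nat_mul]; congr 2; push_cast; ring
  rw [e]
  have h1 : Real.exp (-(R / r₀)) * (1 + R / r₀) ≤ 1 := by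
    rw [Real.exp_neg, inv_mul_le_iff₀ (Real.exp_pos _), mul_one]
    linarith [Real.add_one_le_exp (R / r₀)]
  exact pow_le_one₀ (by positivity) h1

lemma weight_div_le {r₀ R : ℝ} (hr : 0 < r₀) (hR : -r₀ < R) :
    Real.exp (-2 * R / r₀) * (1 + R / r₀) ^ 2 / (R + r₀) ^ 2 ≤ Real.exp 2 / r₀ ^ 2 := by
  have h0 : R + r₀ ≠ 0 := by linarith
  have e : Real.exp (-2 * R / r₀) * (1 + R / r₀) ^ 2 / (R + r₀) ^ 2
      = Real.exp (-2 * R / r₀) / r₀ ^ 2 := by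
    field_simp
    rw [add_comm]
  rw [e]
  gcongr
  rw [div_le_iff₀ hr]
  linarith

/-! ### The energy density -/

lemma ramp_mem {h ε : ℝ} (hh : 0 < h) (hε : 0 < ε) (R : ℝ) :
    0 ≤ ramp h ε R ∧ ramp h ε R ≤ h := by
  have p1 := profile_pos hh (-(1 / ε))
  have p2 := profile_le hh (-(1 / ε))
  unfold ramp
  rw [sub_profile]
  split_ifs with h1 h2 h3 h4
  · exact ⟨le_rfl, hh.le⟩
  · have a : 0 ≤ R + 2 * ε := by linarith
    refine ⟨by positivity, ?_⟩
    rw [div_le_iff₀ hε]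
    nlinarith
  · exact ⟨(profile_pos hh _).le, profile_le hh _⟩
  · have e : profile h (-(1 / ε)) * (R - 2 * ε) / ε + h
        = h - profile h (-(1 / ε)) * (2 * ε - R) / ε := by ring
    have a : 0 ≤ profile h (-(1 / ε)) * (2 * ε - R) / ε :=
      div_nonneg (mul_nonneg p1.le (by linarith)) hε.le
    have b : profile h (-(1 / ε)) * (2 * ε - R) / ε ≤ h := by
      rw [div_le_iff₀ hε]
      nlinarith
    rw [e]
    exact ⟨by linarith, by linarith⟩
  · exact ⟨hh.le, le_rfl⟩

/-- The bound on the ramps: there the slope is at most `1`, and `w` lies within `ε` of one of the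
wells `0` and `h`, which gives the hypothesis on `w² (h - w)²`. -/
lemma local_density_le {h ε d w : ℝ} (hε : 0 < ε) (hε1 : ε ≤ 1)
    (hd : d ^ 2 ≤ 1) (hw : w ^ 2 * (h - w) ^ 2 ≤ h ^ 2 * ε ^ 2) :
    ε ^ 2 * (d ^ 2 / 3) + w ^ 2 * (h - w) ^ 2 / ε ^ 2 ≤ 1 + h ^ 2 := by
  have h1 : w ^ 2 * (h - w) ^ 2 / ε ^ 2 ≤ h ^ 2 := by
    rw [div_le_iff₀ (by positivity)]; exact hw
  have h2 : ε ^ 2 ≤ 1 := pow_le_one₀ hε.le hε1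
  have h3 : ε ^ 2 * (d ^ 2 / 3) ≤ 1 * 1 := by
    gcongr
    linarith
  linarith

/-- The gradient and potential terms, away from the corners of the initial condition. -/
lemma gradient_potential_le {h ε R : ℝ} (hh : 0 < h) (hε : 0 < ε) (hε1 : ε ≤ 1)
    (n1 : R ≠ -2 * ε) (n2 : R ≠ -ε) (n3 : R ≠ ε) (n4 : R ≠ 2 * ε) :
    ε ^ 2 * (deriv (ramp h ε) R ^ 2 / 3)
        + ramp h ε R ^ 2 * (h - ramp h ε R) ^ 2 / ε ^ 2
      ≤ 2 * profile h (R / ε ^ 2) ^ 2 * (h - profile h (R / ε ^ 2)) ^ 2 / ε ^ 2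
        + (Icc (-2 * ε) (2 * ε)).indicator (fun _ => 1 + h ^ 2) R := by
  have p1 := profile_pos hh (-(1 / ε))
  have p2 := profile_tail_le hh hε
  have hslope : (profile h (-(1 / ε)) / ε) ^ 2 ≤ 1 :=
    pow_le_one₀ (by positivity) ((div_le_one hε).2 p2)
  have hmaj : 0 ≤ 2 * profile h (R / ε ^ 2) ^ 2 * (h - profile h (R / ε ^ 2)) ^ 2 / ε ^ 2 := by
    positivity
  have hind : 0 ≤ (Icc (-2 * ε) (2 * ε)).indicator (fun _ => 1 + h ^ 2) R :=
    indicator_nonneg (fun _ _ => by positivity) _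
  have hm := ramp_mem hh hε R
  rcases lt_or_gt_of_ne n1 with a1 | a1
  · have ev : ramp h ε =ᶠ[𝓝 R] fun _ => 0 := by
      filter_upwards [Iio_mem_nhds a1] with x hx
      exact if_pos hx
    rw [ev.deriv_eq, ev.eq_of_nhds]
    simp only [deriv_const]
    refine le_trans (le_of_eq ?_) (add_nonneg hmaj hind)
    ring
  rcases lt_or_gt_of_ne n2 with a2 | a2
  · have ev : ramp h ε =ᶠ[𝓝 R] fun x => profile h (-(1 / ε)) * (x + 2 * ε) / ε := by
      filter_upwards [Ioo_mem_nhds a1 a2] with x hx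
      simp only [ramp]
      rw [if_neg (by linarith [hx.1]), if_pos hx.2]
    have hd : HasDerivAt (fun x => profile h (-(1 / ε)) * (x + 2 * ε) / ε)
        (profile h (-(1 / ε)) / ε) R := by
      simpa using (((hasDerivAt_id R).add_const (2 * ε)).const_mul (profile h (-(1 / ε)))).div_const ε
    rw [indicator_of_mem (by constructor <;> linarith)]
    have hv : ramp h ε R ≤ ε := by
      rw [ev.eq_of_nhds]
      refine le_trans ?_ p2
      rw [div_le_iff₀ hε]
      nlinarith
    have key := local_density_le (h := h) (w := ramp h ε R) (d := deriv (ramp h ε) R) hε hε1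
      (by rw [ev.deriv_eq, hd.deriv]; exact hslope)
      (by
        rw [mul_comm]
        have := hm.1
        gcongr <;> linarith)
    linarith
  rcases lt_or_gt_of_ne n3 with a3 | a3
  · have ev : ramp h ε =ᶠ[𝓝 R] fun x => profile h (x / ε ^ 2) := by
      filter_upwards [Ioo_mem_nhds a2 a3] with x hx
      simp only [ramp]
      rw [if_neg (by linarith [hx.1]), if_neg (by linarith [hx.1]), if_pos hx.2.le]
    rw [ev.deriv_eq, (hasDerivAt_profile_div h ε R).deriv, ev.eq_of_nhds]
    have h3 : Real.sqrt 3 ^ 2 = 3 := Real.sq_sqrt (by norm_num)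
    -- equipartition: the two terms coincide
    have e : ε ^ 2 * ((Real.sqrt 3 * profile h (R / ε ^ 2) * (h - profile h (R / ε ^ 2)) / ε ^ 2) ^ 2
        / 3) = profile h (R / ε ^ 2) ^ 2 * (h - profile h (R / ε ^ 2)) ^ 2 / ε ^ 2 := by
      rw [div_pow, mul_pow, mul_pow, h3]
      generalize profile h (R / ε ^ 2) = s
      field_simp
    rw [e]
    have e2 : ∀ s : ℝ, s ^ 2 * (h - s) ^ 2 / ε ^ 2 + s ^ 2 * (h - s) ^ 2 / ε ^ 2
        = 2 * s ^ 2 * (h - s) ^ 2 / ε ^ 2 := fun s => by ring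
    rw [e2]
    linarith
  rcases lt_or_gt_of_ne n4 with a4 | a4
  · have ev : ramp h ε =ᶠ[𝓝 R] fun x => profile h (-(1 / ε)) * (x - 2 * ε) / ε + h := by
      filter_upwards [Ioo_mem_nhds a3 a4] with x hx
      simp only [ramp]
      rw [if_neg (by linarith [hx.1]), if_neg (by linarith [hx.1]), if_neg (by linarith [hx.1]),
        if_pos hx.2.le, sub_profile]
    have hd : HasDerivAt (fun x => profile h (-(1 / ε)) * (x - 2 * ε) / ε + h)
        (profile h (-(1 / ε)) / ε) R := by
      simpa using ((((hasDerivAt_id R).sub_const (2 * ε)).const_mul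
        (profile h (-(1 / ε)))).div_const ε).add_const h
    rw [indicator_of_mem (by constructor <;> linarith)]
    have hv : h - ramp h ε R ≤ ε := by
      have e : h - ramp h ε R = profile h (-(1 / ε)) * (2 * ε - R) / ε := by
        rw [ev.eq_of_nhds]; ring
      rw [e]
      refine le_trans ?_ p2
      rw [div_le_iff₀ hε]
      nlinarith
    have key := local_density_le (h := h) (w := ramp h ε R) (d := deriv (ramp h ε) R) hε hε1
      (by rw [ev.deriv_eq, hd.deriv]; exact hslope)
      (by
        have := hm.1
        have := sub_nonneg.2 hm.2
        gcongr
        linarith)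
    linarith
  · have ev : ramp h ε =ᶠ[𝓝 R] fun _ => h := by
      filter_upwards [Ioi_mem_nhds a4] with x hx
      have hx := mem_Ioi.1 hx
      simp only [ramp]
      rw [if_neg (by linarith), if_neg (by linarith), if_neg (by linarith), if_neg (by linarith)]
    rw [ev.deriv_eq, ev.eq_of_nhds]
    simp only [deriv_const]
    refine le_trans (le_of_eq ?_) (add_nonneg hmaj hind)
    ring

/-- The corners of the initial condition, excluded here, form a null set. -/
lemma energyDensity_le {h ε r₀ R : ℝ} (hh : 0 < h) (hε : 0 < ε) (hε1 : ε ≤ 1) (hr : 0 < r₀)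
    (hR : -r₀ < R)
    (n1 : R ≠ -2 * ε) (n2 : R ≠ -ε) (n3 : R ≠ ε) (n4 : R ≠ 2 * ε) :
    Real.exp (-2 * R / r₀) * (1 + R / r₀) ^ 2 * (ε ^ 2 * (deriv (ramp h ε) R ^ 2 / 3
        + 2 * ramp h ε R ^ 2 / (R + r₀) ^ 2) + ramp h ε R ^ 2 * (h - ramp h ε R) ^ 2 / ε ^ 2)
      ≤ majorant h r₀ ε R := by
  have g := gradient_potential_le hh hε hε1 n1 n2 n3 n4
  have w1 := weight_le_one hr hR.le
  have w2 := weight_div_le hr hR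
  have w0 : 0 ≤ Real.exp (-2 * R / r₀) * (1 + R / r₀) ^ 2 := by positivity
  have hm := ramp_mem hh hε R
  set W := Real.exp (-2 * R / r₀) * (1 + R / r₀) ^ 2
  set X := ε ^ 2 * (deriv (ramp h ε) R ^ 2 / 3) + ramp h ε R ^ 2 * (h - ramp h ε R) ^ 2 / ε ^ 2
    with hX
  have X0 : 0 ≤ X := by positivity
  have e : W * (ε ^ 2 * (deriv (ramp h ε) R ^ 2 / 3
        + 2 * ramp h ε R ^ 2 / (R + r₀) ^ 2) + ramp h ε R ^ 2 * (h - ramp h ε R) ^ 2 / ε ^ 2)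
      = W * X + 2 * ramp h ε R ^ 2 * (W / (R + r₀) ^ 2) * ε ^ 2 := by
    rw [hX]; ring
  have c : 2 * ramp h ε R ^ 2 * (W / (R + r₀) ^ 2) * ε ^ 2
      ≤ 2 * h ^ 2 * (Real.exp 2 / r₀ ^ 2) * ε ^ 2 := by
    have := hm.1
    have := hm.2
    gcongr
  have c2 : W * X ≤ X := mul_le_of_le_one_left X0 w1
  have e3 : 2 * h ^ 2 * (Real.exp 2 / r₀ ^ 2) * ε ^ 2 = 2 * h ^ 2 * Real.exp 2 / r₀ ^ 2 * ε ^ 2 := by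
    ring
  rw [e, majorant]
  linarith

/-! ### Integration -/

lemma intervalIntegrable_core (h ε a b : ℝ) : IntervalIntegrable
    (fun R => 2 * profile h (R / ε ^ 2) ^ 2 * (h - profile h (R / ε ^ 2)) ^ 2 / ε ^ 2)
    volume a b := by
  have := continuous_profile h
  exact Continuous.intervalIntegrable (by fun_prop) a b

lemma integrable_plateau (h ε : ℝ) :
    Integrable ((Icc (-2 * ε) (2 * ε)).indicator fun _ => 1 + h ^ 2) := by
  rw [integrable_indicator_iff measurableSet_Icc]
  exact integrableOn_const (by simp)

lemma intervalIntegrable_majorant (h r₀ ε a b : ℝ) :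
    IntervalIntegrable (majorant h r₀ ε) volume a b :=
  ((intervalIntegrable_core h ε a b).add intervalIntegrable_const).add
    (integrable_plateau h ε).intervalIntegrable

lemma integral_majorant_le {h ε r₀ : ℝ} (hh : 0 < h) (hε : 0 < ε) (hε1 : ε ≤ 1) (hr : 0 < r₀) :
    ∫ R in (-r₀)..(1 - r₀), majorant h r₀ ε R
      ≤ h ^ 3 / (3 * Real.sqrt 3)
        + (2 * h ^ 2 * Real.exp 2 / r₀ ^ 2 + 4 * (1 + h ^ 2)) * ε := by
  have i1 := intervalIntegrable_core h ε (-r₀) (1 - r₀)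
  have i3 := (integrable_plateau h ε).intervalIntegrable (a := -r₀) (b := 1 - r₀)
  have core : ∫ R in (-r₀)..(1 - r₀),
      2 * profile h (R / ε ^ 2) ^ 2 * (h - profile h (R / ε ^ 2)) ^ 2 / ε ^ 2
      ≤ h ^ 3 / (3 * Real.sqrt 3) := by
    rw [intervalIntegral.integral_eq_sub_of_hasDerivAt
      (fun R _ => hasDerivAt_wellPrimitive_profile h ε R) i1]
    have a := wellPrimitive_le (profile_pos hh ((1 - r₀) / ε ^ 2)).le (profile_le hh _)
    have b := wellPrimitive_nonneg (profile_pos hh (-r₀ / ε ^ 2)).le (profile_le hh _)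
    linarith
  have plateau : ∫ R in (-r₀)..(1 - r₀),
      (Icc (-2 * ε) (2 * ε)).indicator (fun _ => 1 + h ^ 2) R ≤ 4 * (1 + h ^ 2) * ε := by
    rw [intervalIntegral.integral_of_le (by linarith)]
    refine (setIntegral_le_integral (integrable_plateau h ε)
      (Eventually.of_forall fun x => indicator_nonneg (fun _ _ => by positivity) x)).trans ?_
    rw [integral_indicator_const _ measurableSet_Icc, measureReal_def, Real.volume_Icc,
      ENNReal.toReal_ofReal (by linarith), smul_eq_mul]
    exact le_of_eq (by ring)
  simp only [majorant]
  rw [intervalIntegral.integral_add (i1.add intervalIntegrable_const) i3,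
    intervalIntegral.integral_add i1 intervalIntegrable_const, intervalIntegral.integral_const]
  have hsq : 2 * h ^ 2 * Real.exp 2 / r₀ ^ 2 * ε ^ 2 ≤ 2 * h ^ 2 * Real.exp 2 / r₀ ^ 2 * ε := by
    gcongr
    nlinarith
  have e : (1 - r₀ - -r₀) • (2 * h ^ 2 * Real.exp 2 / r₀ ^ 2 * ε ^ 2)
      = 2 * h ^ 2 * Real.exp 2 / r₀ ^ 2 * ε ^ 2 := by
    rw [smul_eq_mul]; ring
  rw [e]
  linarith

/-- the explicit piecewise initial condition built from the
profile `σ(R) = h₊/(1 + exp(−√3 h₊ R))` has weighted energy at most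
`g(h₊) + C L̄^{1/4}` for all sufficiently small `L̄ > 0`. -/
theorem initial_condition_energy_bound
    (B C : ℝ) (hB : 0 < B) (hC : 0 < C)
    (hp : ℝ) (hhp : hp = B / (3 * C))
    (r₀ : ℝ) (hr₀ : r₀ ∈ Ioo (1/2 : ℝ) 1)
    (σ : ℝ → ℝ)
    (hσ : ∀ R, σ R = hp / (1 + Real.exp (-(Real.sqrt 3) * hp * R)))
    (w : ℝ → ℝ → ℝ)
    (hw : ∀ Lb R, w Lb R =
      if R < -2 * Lb ^ ((1:ℝ)/4) then 0
      else if R < -(Lb ^ ((1:ℝ)/4)) then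
        σ (-(1 / Lb ^ ((1:ℝ)/4))) * (R + 2 * Lb ^ ((1:ℝ)/4)) / Lb ^ ((1:ℝ)/4)
      else if R ≤ Lb ^ ((1:ℝ)/4) then σ (R / Real.sqrt Lb)
      else if R ≤ 2 * Lb ^ ((1:ℝ)/4) then
        (hp - σ (1 / Lb ^ ((1:ℝ)/4))) * (R - 2 * Lb ^ ((1:ℝ)/4)) / Lb ^ ((1:ℝ)/4) + hp
      else hp)
    (φ : ℝ → ℝ)
    (hφ : ∀ R, φ R = Real.exp (-2 * R / r₀) * (1 + R / r₀) ^ 2) :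
    ∃ Cc > (0:ℝ), ∃ δ > (0:ℝ), ∀ Lb : ℝ, 0 < Lb → Lb < δ →
      (∫ R in (-r₀)..(1 - r₀),
          φ R * (Real.sqrt Lb * ((deriv (w Lb) R) ^ 2 / 3
              + 2 * (w Lb R) ^ 2 / (R + r₀) ^ 2)
            + (w Lb R) ^ 2 * (hp - w Lb R) ^ 2 / Real.sqrt Lb))
        ≤ hp ^ 3 / (3 * Real.sqrt 3) + Cc * Lb ^ ((1:ℝ)/4) := by
  have hh : 0 < hp := by rw [hhp]; positivity
  have hr : 0 < r₀ := by linarith [hr₀.1]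
  obtain rfl : σ = profile hp := funext hσ
  obtain rfl : φ = fun R => Real.exp (-2 * R / r₀) * (1 + R / r₀) ^ 2 := funext hφ
  refine ⟨2 * hp ^ 2 * Real.exp 2 / r₀ ^ 2 + 4 * (1 + hp ^ 2), by positivity, 1, one_pos, ?_⟩
  intro Lb hL hL1
  have hε : 0 < Lb ^ ((1:ℝ)/4) := by positivity
  have hε1 : Lb ^ ((1:ℝ)/4) ≤ 1 := Real.rpow_le_one hL.le hL1.le (by norm_num)
  have hs : Real.sqrt Lb = (Lb ^ ((1:ℝ)/4)) ^ 2 := by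
    rw [← Real.rpow_natCast, ← Real.rpow_mul hL.le, Real.sqrt_eq_rpow]
    norm_num
  have hwr : w Lb = ramp hp (Lb ^ ((1:ℝ)/4)) := by
    funext R
    rw [hw, hs, ramp]
  rw [hwr, hs]
  generalize Lb ^ ((1:ℝ)/4) = ε at hε hε1
  refine le_trans ?_ (integral_majorant_le hh hε hε1 hr)
  have hle : -r₀ ≤ 1 - r₀ := by linarith
  rw [intervalIntegral.integral_of_le hle, intervalIntegral.integral_of_le hle]
  refine integral_mono_of_nonneg (Eventually.of_forall fun R => by dsimp only; positivity)
    ((intervalIntegrable_iff_integrableOn_Ioc_of_le hle).1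
      (intervalIntegrable_majorant hp r₀ ε _ _)) ?_
  have hne : ∀ c : ℝ, ∀ᵐ R ∂(volume.restrict (Ioc (-r₀) (1 - r₀))), R ≠ c := fun c =>
    ae_restrict_of_ae (Measure.ae_ne volume c)
  filter_upwards [ae_restrict_mem measurableSet_Ioc, hne (-2 * ε), hne (-ε), hne ε, hne (2 * ε)]
    with R hR n1 n2 n3 n4
  exact energyDensity_le hh hε hε1 hr hR.1 n1 n2 n3 n4
end
end

section
/- Let Ω be the unit disc in ℝ² and let Q : Ω̄ × [0,∞) → S₀ be a smooth solution of the gradient flow system γ ∂ₜQ = L ΔQ − A Q + B(Q² − (tr Q²/3) I) − C (tr Q²) Q with fixed boundary condition Q = Q_c := (B/(3C))(n₁ ⊗ n₁ − I/3) on r = 1 (where n₁ = (cos θ, sin θ, 0)), with an initial condition satisfying Q₁₃(x,0) = Q₂₃(x,0) = 0 and |Q(x,0)| ≤ √(2/3)·B/(3C) for all x ∈ Ω, and satisfying |Q(x,t)| ≤ √(2/3)·B/(3C) for all t ≥ 0. Then Q₁₃(x,t) = Q₂₃(x,t) = 0 for all x ∈ Ω and all t ≥ 0. -/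
/-!
The proof is a maximum principle for `w = Q₁₃² + Q₂₃²`.

If `w` is positive somewhere at a time in `[0, T]`, then `w e^{-lt}` attains a positive maximum over
the compact set `disc × [0, T]`, say at `(x₀, t₀)`. The initial and boundary data are planar, so
`x₀` is interior and `t₀ > 0`. With `a = Q₁₃(x₀,t₀)` and `b = Q₂₃(x₀,t₀)`, the *linear* combination
`a Q₁₃(·,t₀) + b Q₂₃(·,t₀)` has a maximum at `x₀` as well, since it is at most
`(a² + b² + w(·,t₀)) / 2 ≤ a² + b²`. Hence `a ΔQ₁₃ + b ΔQ₂₃ ≤ 0` there (`lap_comb_nonpos`). The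
equations, together with the bound `|Q| ≤ M` (`bulk_pairing_le`), then give `γ ∂ₜw ≤ 6 B M w` at
the point, whereas maximality in time gives `∂ₜw ≥ l w` (`HasDerivAt.nonneg_of_le_left`). These are
incompatible once `γ l > 6 B M`.
-/

noncomputable section

open Matrix Set

/-- Euclidean norm on the plane `Fin 2 → ℝ`. -/
def rnorm2 (x : Fin 2 → ℝ) : ℝ := Real.sqrt (x 0 ^ 2 + x 1 ^ 2)

lemma deriv_deriv_nonpos_of_isLocalMax {f : ℝ → ℝ} {x : ℝ} (hf : ContinuousAt f x)
    (h : IsLocalMax f x) : deriv (deriv f) x ≤ 0 := by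
  by_contra! hpos
  -- The second derivative test makes `x` a local minimum too, so `f` is locally constant.
  have hmin := isLocalMin_of_deriv_deriv_pos hpos h.deriv_eq_zero hf
  have hconst : f =ᶠ[nhds x] fun _ => f x := by
    filter_upwards [h, hmin] with y h1 h2
    exact le_antisymm h1 h2
  have h0 : deriv (deriv f) x = 0 := by
    rw [hconst.deriv.deriv_eq]
    simp
  exact hpos.ne' h0

lemma HasDerivAt.nonneg_of_le_left {f : ℝ → ℝ} {D t : ℝ} (hf : HasDerivAt f D t) (ht : 0 < t)
    (h : ∀ s, 0 ≤ s → s ≤ t → f s ≤ f t) : 0 ≤ D := by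
  have h1 : Filter.Tendsto (slope f t) (nhdsWithin t (Iio t)) (nhds D) :=
    (hasDerivAt_iff_tendsto_slope.1 hf).mono_left
      (nhdsWithin_mono _ fun s hs => ne_of_lt hs)
  refine ge_of_tendsto h1 ?_
  filter_upwards [Ioo_mem_nhdsLT ht] with s hs
  rw [slope_def_field]
  exact div_nonneg_of_nonpos (by linarith [h s hs.1.le hs.2.le]) (by linarith [hs.2])

lemma pd_pd_eq {n : ℕ} (k : Fin n) (f : (Fin n → ℝ) → ℝ) (x : Fin n → ℝ) :
    pd k (pd k f) x = iteratedDeriv 2 (fun s => f (Function.update x k s)) (x k) := by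
  rw [iteratedDeriv_succ, iteratedDeriv_one]
  unfold pd
  simp only [Function.update_idem, Function.update_self]

lemma lap_comb_nonpos {n : ℕ} {u v : (Fin n → ℝ) → ℝ} {x : Fin n → ℝ} (a b : ℝ)
    (hu : ContDiffAt ℝ 2 u x) (hv : ContDiffAt ℝ 2 v x)
    (h : IsLocalMax (fun y => a * u y + b * v y) x) :
    a * lap u x + b * lap v x ≤ 0 := by
  unfold lap
  rw [Finset.mul_sum, Finset.mul_sum, ← Finset.sum_add_distrib]
  refine Finset.sum_nonpos fun k _ => ?_
  have hupd : ContDiff ℝ 2 (fun s : ℝ => Function.update x k s) := contDiff_update 2 x k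
  have hx : Function.update x k (x k) = x := Function.update_eq_self k x
  have hu' : ContDiffAt ℝ 2 (fun s => u (Function.update x k s)) (x k) :=
    ContDiffAt.comp (x k) (by rwa [hx]) hupd.contDiffAt
  have hv' : ContDiffAt ℝ 2 (fun s => v (Function.update x k s)) (x k) :=
    ContDiffAt.comp (x k) (by rwa [hx]) hupd.contDiffAt
  have hmax : IsLocalMax
      (fun s => a * u (Function.update x k s) + b * v (Function.update x k s)) (x k) := by
    have ht : Filter.Tendsto (fun s : ℝ => Function.update x k s) (nhds (x k)) (nhds x) := by
      simpa [hx] using hupd.continuous.tendsto (x k)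
    filter_upwards [ht.eventually h] with s hs
    simpa [hx] using hs
  have hau := contDiffAt_const (c := a).mul hu'
  have hbv := contDiffAt_const (c := b).mul hv'
  have key := deriv_deriv_nonpos_of_isLocalMax (hau.add hbv).continuousAt hmax
  have e : iteratedDeriv 2
      (fun s => a * u (Function.update x k s) + b * v (Function.update x k s)) (x k)
      = a * iteratedDeriv 2 (fun s => u (Function.update x k s)) (x k)
        + b * iteratedDeriv 2 (fun s => v (Function.update x k s)) (x k) := by
    rw [iteratedDeriv_fun_add hau hbv, iteratedDeriv_const_mul_field,
      iteratedDeriv_const_mul_field]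
  rw [iteratedDeriv_succ, iteratedDeriv_one] at e
  rw [pd_pd_eq, pd_pd_eq, ← e]
  exact key

/-- The reaction terms of the `Q₁₃` and `Q₂₃` equations, paired with `(Q₁₃, Q₂₃)`, are quadratic in
`(Q₁₃, Q₂₃)`; the `A` and `C` contributions have a favourable sign. -/
lemma bulk_pairing_le {A B C M : ℝ} (hA : 0 ≤ A) (hB : 0 ≤ B) (hC : 0 ≤ C)
    {Q : Matrix (Fin 3) (Fin 3) ℝ} (hQ : Qᵀ = Q) (hM : ∀ i j, |Q i j| ≤ M) :
    Q 0 2 * bulk A B C Q 0 2 + Q 1 2 * bulk A B C Q 1 2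
      ≤ 3 * B * M * (Q 0 2 ^ 2 + Q 1 2 ^ 2) := by
  have hs : ∀ i j, Q j i = Q i j := fun i j => congrFun (congrFun hQ i) j
  have htr : 0 ≤ trace (Q * Q) := by
    simp only [trace, diag, mul_apply]
    refine Finset.sum_nonneg fun i _ => Finset.sum_nonneg fun j _ => ?_
    rw [hs i j]
    exact mul_self_nonneg _
  have e : Q 0 2 * bulk A B C Q 0 2 + Q 1 2 * bulk A B C Q 1 2
      = -(A * (Q 0 2 ^ 2 + Q 1 2 ^ 2))
        + B * (Q 0 0 * Q 0 2 ^ 2 + 2 * (Q 0 1 * (Q 0 2 * Q 1 2)) + Q 1 1 * Q 1 2 ^ 2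
          + Q 2 2 * (Q 0 2 ^ 2 + Q 1 2 ^ 2))
        - C * trace (Q * Q) * (Q 0 2 ^ 2 + Q 1 2 ^ 2) := by
    have h02 : (Q * Q) 0 2 = Q 0 0 * Q 0 2 + Q 0 1 * Q 1 2 + Q 0 2 * Q 2 2 := by
      simp [mul_apply, Fin.sum_univ_three]
    have h12 : (Q * Q) 1 2 = Q 0 1 * Q 0 2 + Q 1 1 * Q 1 2 + Q 1 2 * Q 2 2 := by
      simp [mul_apply, Fin.sum_univ_three, hs 0 1]
    simp only [bulk, Matrix.sub_apply, Matrix.add_apply, Matrix.neg_apply, Matrix.smul_apply,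
      smul_eq_mul, h02, h12, Matrix.one_apply]
    simp
    ring
  have h1 : Q 0 0 * Q 0 2 ^ 2 ≤ M * Q 0 2 ^ 2 :=
    mul_le_mul_of_nonneg_right (abs_le.1 (hM 0 0)).2 (sq_nonneg _)
  have h2 : Q 1 1 * Q 1 2 ^ 2 ≤ M * Q 1 2 ^ 2 :=
    mul_le_mul_of_nonneg_right (abs_le.1 (hM 1 1)).2 (sq_nonneg _)
  have h3 : Q 2 2 * (Q 0 2 ^ 2 + Q 1 2 ^ 2) ≤ M * (Q 0 2 ^ 2 + Q 1 2 ^ 2) :=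
    mul_le_mul_of_nonneg_right (abs_le.1 (hM 2 2)).2 (by positivity)
  have h4 : 2 * (Q 0 1 * (Q 0 2 * Q 1 2)) ≤ M * (Q 0 2 ^ 2 + Q 1 2 ^ 2) := by
    obtain ⟨hl, hr⟩ := abs_le.1 (hM 0 1)
    nlinarith [mul_nonneg (sub_nonneg.2 hr) (sq_nonneg (Q 0 2 - Q 1 2)),
      mul_nonneg (neg_le_iff_add_nonneg.1 hl) (sq_nonneg (Q 0 2 + Q 1 2))]
  have hw : 0 ≤ Q 0 2 ^ 2 + Q 1 2 ^ 2 := by positivity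
  have h5 := mul_le_mul_of_nonneg_left (add_le_add (add_le_add (add_le_add h1 h4) h2) h3) hB
  have h6 := mul_nonneg hA hw
  have h7 := mul_nonneg (mul_nonneg hC htr) hw
  rw [e]
  linarith

lemma continuous_rnorm2 : Continuous rnorm2 := by
  unfold rnorm2
  fun_prop

lemma isCompact_disc : IsCompact {x : Fin 2 → ℝ | rnorm2 x ≤ 1} := by
  refine Metric.isCompact_of_isClosed_isBounded
    (isClosed_le continuous_rnorm2 continuous_const) ?_
  refine (Metric.isBounded_closedBall (x := (0 : Fin 2 → ℝ)) (r := 1)).subset fun x hx => ?_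
  rw [mem_closedBall_zero_iff, pi_norm_le_iff_of_nonneg zero_le_one]
  have hx' : rnorm2 x ≤ 1 := hx
  intro i
  refine le_trans (Real.abs_le_sqrt (y := x 0 ^ 2 + x 1 ^ 2) ?_) hx'
  fin_cases i
  · simpa using sq_nonneg (x 1)
  · simpa using sq_nonneg (x 0)

/-- on the unit disc with the planar radial Dirichlet condition
`Q_c = (B/(3C))(n₁ ⊗ n₁ − I/3)`, a solution of the gradient flow with a planar
initial condition obeying `|Q(x,0)| ≤ √(2/3)·B/(3C)`, and obeying the same
bound for all times, stays planar: `Q₁₃ = Q₂₃ = 0` for all `t ≥ 0`. -/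
theorem planar_initial_data_stays_planar
    (L B C γ A : ℝ) (hL : 0 < L) (hB : 0 < B) (hC : 0 < C) (hγ : 0 < γ)
    (hA : A = B ^ 2 / (27 * C))
    (Q : (Fin 2 → ℝ) → ℝ → Matrix (Fin 3) (Fin 3) ℝ)
    (hsmooth : ∀ i j : Fin 3,
      ContDiffOn ℝ (⊤ : ℕ∞) (fun p : (Fin 2 → ℝ) × ℝ => Q p.1 p.2 i j)
        ({x : Fin 2 → ℝ | rnorm2 x ≤ 1} ×ˢ Ici (0:ℝ)))
    (hS₀ : ∀ x : Fin 2 → ℝ, rnorm2 x ≤ 1 → ∀ t : ℝ, 0 ≤ t →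
      (Q x t)ᵀ = Q x t ∧ Matrix.trace (Q x t) = 0)
    (hpde : ∀ x : Fin 2 → ℝ, rnorm2 x < 1 → ∀ t : ℝ, 0 < t → ∀ i j : Fin 3,
      γ * deriv (fun s => Q x s i j) t
        = L * lap (fun y => Q y t i j) x + bulk A B C (Q x t) i j)
    (hbc : ∀ x : Fin 2 → ℝ, rnorm2 x = 1 → ∀ t : ℝ, 0 ≤ t →
      Q x t = (B / (3 * C)) •
        (vecMulVec ![x 0, x 1, 0] ![x 0, x 1, 0]
          - (1 / 3 : ℝ) • (1 : Matrix (Fin 3) (Fin 3) ℝ)))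
    (hic : ∀ x : Fin 2 → ℝ, rnorm2 x ≤ 1 →
      Q x 0 0 2 = 0 ∧ Q x 0 1 2 = 0 ∧
        Real.sqrt (mnormSq (Q x 0)) ≤ Real.sqrt (2/3) * B / (3 * C))
    (hbound : ∀ x : Fin 2 → ℝ, rnorm2 x ≤ 1 → ∀ t : ℝ, 0 ≤ t →
      Real.sqrt (mnormSq (Q x t)) ≤ Real.sqrt (2/3) * B / (3 * C)) :
    ∀ x : Fin 2 → ℝ, rnorm2 x ≤ 1 → ∀ t : ℝ, 0 ≤ t →
      Q x t 0 2 = 0 ∧ Q x t 1 2 = 0 := by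
  intro x hx T hT
  set M : ℝ := Real.sqrt (2/3) * B / (3 * C) with hMdef
  have hA0 : 0 ≤ A := by rw [hA]; positivity
  have hent : ∀ x : Fin 2 → ℝ, rnorm2 x ≤ 1 → ∀ t : ℝ, 0 ≤ t → ∀ i j, |Q x t i j| ≤ M :=
    fun x hx t ht i j => abs_entry_le (hbound x hx t ht) i j
  -- Any `l` with `γ l > 6 B M` works.
  obtain ⟨l, hl⟩ : ∃ l : ℝ, γ * l = 6 * B * M + 1 := ⟨(6 * B * M + 1) / γ, by field_simp⟩
  set φ : (Fin 2 → ℝ) × ℝ → ℝ :=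
    fun p => (Q p.1 p.2 0 2 ^ 2 + Q p.1 p.2 1 2 ^ 2) * Real.exp (-l * p.2) with hφ
  have hsub : {x : Fin 2 → ℝ | rnorm2 x ≤ 1} ×ˢ Icc 0 T ⊆
      {x : Fin 2 → ℝ | rnorm2 x ≤ 1} ×ˢ Ici (0:ℝ) :=
    prod_mono_right Icc_subset_Ici_self
  have hcont : ContinuousOn φ ({x : Fin 2 → ℝ | rnorm2 x ≤ 1} ×ˢ Icc 0 T) := by
    have h1 := (hsmooth 0 2).continuousOn.mono hsub
    have h2 := (hsmooth 1 2).continuousOn.mono hsub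
    exact ((h1.pow 2).add (h2.pow 2)).mul (by fun_prop)
  obtain ⟨⟨x₀, t₀⟩, ⟨hx₀, ht₀⟩, hmax⟩ :=
    (isCompact_disc.prod isCompact_Icc).exists_isMaxOn ⟨(x, T), hx, hT, le_rfl⟩ hcont
  have hx₀ : rnorm2 x₀ ≤ 1 := hx₀
  have ht₀ : 0 ≤ t₀ ∧ t₀ ≤ T := ht₀
  have hle : ∀ y s, rnorm2 y ≤ 1 → 0 ≤ s → s ≤ T → φ (y, s) ≤ φ (x₀, t₀) :=
    fun y s hy h0 h1 => hmax (show (y, s) ∈ _ from ⟨hy, h0, h1⟩)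
  set a := Q x₀ t₀ 0 2 with ha
  set b := Q x₀ t₀ 1 2 with hb
  have hw0 : a ^ 2 + b ^ 2 = 0 := by
    by_contra hne
    have hwpos : 0 < a ^ 2 + b ^ 2 := lt_of_le_of_ne (by positivity) (Ne.symm hne)
    have htpos : 0 < t₀ := by
      refine lt_of_le_of_ne ht₀.1 fun h => hne ?_
      rw [ha, hb, ← h, (hic x₀ hx₀).1, (hic x₀ hx₀).2.1]
      simp
    have hxlt : rnorm2 x₀ < 1 := by
      refine lt_of_le_of_ne hx₀ fun h => hne ?_
      rw [ha, hb, hbc x₀ h t₀ ht₀.1]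
      simp
    have hnhds : {x : Fin 2 → ℝ | rnorm2 x ≤ 1} ×ˢ Ici (0:ℝ) ∈ nhds (x₀, t₀) :=
      prod_mem_nhds
        (Filter.mem_of_superset ((isOpen_lt continuous_rnorm2 continuous_const).mem_nhds hxlt)
          fun y (hy : rnorm2 y < 1) => show rnorm2 y ≤ 1 from hy.le)
        (Ici_mem_nhds htpos)
    have hsm : ∀ i j, ContDiffAt ℝ 2 (fun p : (Fin 2 → ℝ) × ℝ => Q p.1 p.2 i j) (x₀, t₀) :=
      fun i j => ((hsmooth i j).contDiffAt hnhds).of_le (WithTop.coe_le_coe.2 (le_top (a := (2 : ℕ∞))))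
    have hsx : ∀ i j, ContDiffAt ℝ 2 (fun y => Q y t₀ i j) x₀ := fun i j =>
      ContDiffAt.comp (f := fun y : Fin 2 → ℝ => (y, t₀)) x₀ (hsm i j) (by fun_prop)
    have hst : ∀ i j, HasDerivAt (fun s => Q x₀ s i j) (deriv (fun s => Q x₀ s i j) t₀) t₀ :=
      fun i j => ((ContDiffAt.comp (f := fun s : ℝ => (x₀, s)) t₀ (hsm i j)
        (by fun_prop)).differentiableAt (by norm_num)).hasDerivAt
    have hlap : a * lap (fun y => Q y t₀ 0 2) x₀ + b * lap (fun y => Q y t₀ 1 2) x₀ ≤ 0 := by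
      refine lap_comb_nonpos a b (hsx 0 2) (hsx 1 2) ?_
      filter_upwards [(isOpen_lt continuous_rnorm2 continuous_const).mem_nhds hxlt] with y hy
      have h1 : Q y t₀ 0 2 ^ 2 + Q y t₀ 1 2 ^ 2 ≤ a ^ 2 + b ^ 2 :=
        le_of_mul_le_mul_right (hle y t₀ (le_of_lt hy) ht₀.1 ht₀.2) (Real.exp_pos _)
      change a * Q y t₀ 0 2 + b * Q y t₀ 1 2 ≤ a * a + b * b
      nlinarith [sq_nonneg (a - Q y t₀ 0 2), sq_nonneg (b - Q y t₀ 1 2)]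
    set u' := deriv (fun s => Q x₀ s 0 2) t₀ with hu'
    set v' := deriv (fun s => Q x₀ s 1 2) t₀ with hv'
    have htime : 0 ≤ 2 * (a * u' + b * v') - l * (a ^ 2 + b ^ 2) := by
      have hexp : HasDerivAt (fun s => Real.exp (-l * s)) (Real.exp (-l * t₀) * (-l)) t₀ := by
        simpa using ((hasDerivAt_id t₀).const_mul (-l)).exp
      have hd := ((((hst 0 2).pow 2).add ((hst 1 2).pow 2)).mul hexp).nonneg_of_le_left htpos
        fun s h0 h1 => hle x₀ s hx₀ h0 (h1.trans ht₀.2)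
      refine nonneg_of_mul_nonneg_left (b := Real.exp (-l * t₀)) (hd.trans_eq ?_) (Real.exp_pos _)
      simp [← ha, ← hb, ← hu', ← hv']
      ring
    have hbulk := bulk_pairing_le hA0 hB.le hC.le (hS₀ x₀ hx₀ t₀ ht₀.1).1 (hent x₀ hx₀ t₀ ht₀.1)
    have p1 := hpde x₀ hxlt t₀ htpos 0 2
    have p2 := hpde x₀ hxlt t₀ htpos 1 2
    rw [← hu'] at p1
    rw [← hv'] at p2
    rw [← ha, ← hb] at hbulk
    have hL' := mul_nonpos_of_nonneg_of_nonpos hL.le hlap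
    have hγ' := mul_nonneg hγ.le htime
    have e1 : γ * (2 * (a * u' + b * v') - l * (a ^ 2 + b ^ 2))
        = 2 * (a * (γ * u') + b * (γ * v')) - (γ * l) * (a ^ 2 + b ^ 2) := by ring
    rw [e1, p1, p2, hl] at hγ'
    linarith
  have hfin := hle x T hx hT le_rfl
  have hfin' : Q x T 0 2 ^ 2 + Q x T 1 2 ^ 2 ≤ 0 := by
    refine le_of_mul_le_mul_right (a := Real.exp (-l * T)) ?_ (Real.exp_pos _)
    rw [zero_mul]
    refine hfin.trans_eq ?_
    change (a ^ 2 + b ^ 2) * _ = 0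
    rw [hw0, zero_mul]
  constructor <;> nlinarith [sq_nonneg (Q x T 0 2), sq_nonneg (Q x T 1 2)]
end
end

section
/- Let u, v : (0,1) → ℝ be smooth solutions of u'' + u'/r − 4u/r² = (u/L)( B²/(27C) + (2/3)Bv + C(u²/2 + 2v²/3) ) and v'' + v'/r = (v/L)( B²/(27C) − Bv/3 + C(u²/2 + 2v²/3) ) + (B/(4L)) u². Define, for (x,y) in the punctured unit disc with r = √(x²+y²) and θ the polar angle, Q(x,y) = (u(r)/2)( n₁ ⊗ n₁ − m ⊗ m ) + v(r)( p ⊗ p − I/3 ), where n₁ = (cos θ, sin θ, 0), m = (−sin θ, cos θ, 0), p = (0,0,1). Then Q takes values in S₀, tr(Q²) = u²/2 + 2v²/3, and Q satisfies the Landau–de Gennes Euler–Lagrange system L ΔQ = (B²/(27C)) Q − B( Q² − (tr Q²/3) I ) + C (tr Q²) Q at every point of the punctured unit disc. -/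
/-!
Write `ρ = √(x² + y²)`, `c = x / ρ = cos θ`, `s = y / ρ = sin θ`. In Cartesian form
`n₁ ⊗ n₁ − m ⊗ m` has entries `c² − s² = cos 2θ` and `2cs = sin 2θ`, so every entry of `Q` is
`(u(ρ)/ρ²) P(x,y) + d v(ρ)`, where `P = α(x² − y²) + βxy` is a harmonic polynomial, homogeneous
of degree two, and `α`, `β`, `d` are constants.

For such a function `Δ(f(ρ) P) = P (f'' + 5 f'/ρ)`; taking `f = u/ρ²` turns this into
`(P/ρ²)(u'' + u'/ρ − 4u/ρ²)` (`lap2_entry`), which is exactly the operator in the first ODE, while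
`Δ(v(ρ)) = v'' + v'/ρ` is the operator in the second.

The nonlinear side is algebra (`ansatzMatrix_sq`): since `c² + s² = 1`, the square of
`n₁ ⊗ n₁ − m ⊗ m` is the projection onto the plane, so `Q²` and `tr Q²` are polynomials in `u`,
`v`, `c`, `s`, and the Euler–Lagrange system splits into the two ODEs.
-/

noncomputable section

open Matrix Set

/-- Laplacian of a scalar field of two real variables. -/
def lap2 (f : ℝ → ℝ → ℝ) (x y : ℝ) : ℝ :=
  deriv (fun s => deriv (fun u => f u y) s) x
    + deriv (fun s => deriv (fun u => f x u) s) y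

/-- The value of the ansatz as an explicit matrix: `u`, `v` are the values of the two profiles and
`(c, s) = (cos θ, sin θ)`. -/
def ansatzMatrix (u v c s : ℝ) : Matrix (Fin 3) (Fin 3) ℝ :=
  !![u / 2 * (c ^ 2 - s ^ 2) - v / 3, u * (c * s), 0;
     u * (c * s), -(u / 2 * (c ^ 2 - s ^ 2)) - v / 3, 0;
     0, 0, 2 * v / 3]

lemma ansatzMatrix_eq (u v c s : ℝ) :
    (u / 2) • (vecMulVec ![c, s, 0] ![c, s, 0] - vecMulVec ![-s, c, 0] ![-s, c, 0])
      + v • (vecMulVec ![0, 0, 1] ![(0:ℝ), 0, 1]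
            - (1 / 3 : ℝ) • (1 : Matrix (Fin 3) (Fin 3) ℝ)) = ansatzMatrix u v c s := by
  ext i j
  fin_cases i <;> fin_cases j <;>
    simp [ansatzMatrix] <;> ring

/-- On the unit circle `c² + s² = 1` the off-diagonal and `cos 2θ` parts of the square come only
from the cross term `-(v/3)(n₁ ⊗ n₁ − m ⊗ m)`. -/
lemma ansatzMatrix_sq (u v c s : ℝ) (h : c ^ 2 + s ^ 2 = 1) :
    ansatzMatrix u v c s * ansatzMatrix u v c s =
      !![u ^ 2 / 4 + v ^ 2 / 9 - u * v / 3 * (c ^ 2 - s ^ 2), -(2 * u * v / 3 * (c * s)), 0;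
         -(2 * u * v / 3 * (c * s)), u ^ 2 / 4 + v ^ 2 / 9 + u * v / 3 * (c ^ 2 - s ^ 2), 0;
         0, 0, 4 * v ^ 2 / 9] := by
  ext i j
  fin_cases i <;> fin_cases j <;>
    simp [ansatzMatrix, Matrix.mul_apply, Fin.sum_univ_three]
  · linear_combination u ^ 2 / 4 * (c ^ 2 + s ^ 2 + 1) * h
  · ring
  · ring
  · linear_combination u ^ 2 / 4 * (c ^ 2 + s ^ 2 + 1) * h
  · ring

lemma trace_ansatzMatrix_sq (u v c s : ℝ) (h : c ^ 2 + s ^ 2 = 1) :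
    Matrix.trace (ansatzMatrix u v c s * ansatzMatrix u v c s)
      = u ^ 2 / 2 + 2 * v ^ 2 / 3 := by
  rw [ansatzMatrix_sq u v c s h]
  simp [Matrix.trace, Fin.sum_univ_three]
  ring

lemma hasDerivAt_sqrt_sq_add (k s : ℝ) (h : 0 < √(s ^ 2 + k)) :
    HasDerivAt (fun s => √(s ^ 2 + k)) (s / √(s ^ 2 + k)) s := by
  have h0 : s ^ 2 + k ≠ 0 := (Real.sqrt_pos.1 h).ne'
  convert ((hasDerivAt_pow 2 s).add_const k).sqrt h0 using 1
  field_simp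
  norm_num
  ring

/-- Second derivative, along a line parallel to a coordinate axis, of a radial profile `f` times a
quadratic polynomial plus a multiple of another radial profile `g`; `k` is the square of the frozen
coordinate. -/
lemma deriv_deriv_radial {f f1 f2 g g1 g2 : ℝ → ℝ}
    (hf : ∀ r ∈ Ioo (0:ℝ) 1, HasDerivAt f (f1 r) r)
    (hf1 : ∀ r ∈ Ioo (0:ℝ) 1, HasDerivAt f1 (f2 r) r)
    (hg : ∀ r ∈ Ioo (0:ℝ) 1, HasDerivAt g (g1 r) r)
    (hg1 : ∀ r ∈ Ioo (0:ℝ) 1, HasDerivAt g1 (g2 r) r)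
    (a b c d k s : ℝ) (hs : √(s ^ 2 + k) ∈ Ioo (0:ℝ) 1) :
    deriv (fun w => deriv (fun t => f √(t ^ 2 + k) * (a * t ^ 2 + b * t + c)
        + d * g √(t ^ 2 + k)) w) s
      = f2 √(s ^ 2 + k) * (s / √(s ^ 2 + k)) ^ 2 * (a * s ^ 2 + b * s + c)
        + f1 √(s ^ 2 + k) * (1 / √(s ^ 2 + k) - s ^ 2 / √(s ^ 2 + k) ^ 3)
            * (a * s ^ 2 + b * s + c)
        + 2 * (f1 √(s ^ 2 + k) * (s / √(s ^ 2 + k)) * (2 * a * s + b))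
        + f √(s ^ 2 + k) * (2 * a)
        + d * (g2 √(s ^ 2 + k) * (s / √(s ^ 2 + k)) ^ 2
            + g1 √(s ^ 2 + k) * (1 / √(s ^ 2 + k) - s ^ 2 / √(s ^ 2 + k) ^ 3)) := by
  have hP : ∀ t : ℝ, HasDerivAt (fun t => a * t ^ 2 + b * t + c) (2 * a * t + b) t := fun t => by
    refine ((((hasDerivAt_pow 2 t).const_mul a).add
      ((hasDerivAt_id' t).const_mul b)).add_const c).congr_deriv ?_
    norm_num
    ring
  have hopen : ∀ᶠ t in nhds s, √(t ^ 2 + k) ∈ Ioo (0:ℝ) 1 :=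
    (by fun_prop : Continuous fun t : ℝ => √(t ^ 2 + k)).continuousAt.eventually
      (isOpen_Ioo.mem_nhds hs)
  have hev : (fun w => deriv (fun t => f √(t ^ 2 + k) * (a * t ^ 2 + b * t + c)
        + d * g √(t ^ 2 + k)) w) =ᶠ[nhds s]
      fun t => f1 √(t ^ 2 + k) * (t / √(t ^ 2 + k)) * (a * t ^ 2 + b * t + c)
        + f √(t ^ 2 + k) * (2 * a * t + b) + d * (g1 √(t ^ 2 + k) * (t / √(t ^ 2 + k))) := by
    filter_upwards [hopen] with t ht
    have hρ := hasDerivAt_sqrt_sq_add k t ht.1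
    exact ((((hf _ ht).comp t hρ).mul (hP t)).add (((hg _ ht).comp t hρ).const_mul d)).deriv
  rw [hev.deriv_eq]
  have hρ := hasDerivAt_sqrt_sq_add k s hs.1
  have hL : HasDerivAt (fun t : ℝ => 2 * a * t + b) (2 * a) s := by
    simpa using ((hasDerivAt_id' s).const_mul (2 * a)).add_const b
  have hq := (hasDerivAt_id' s).div hρ hs.1.ne'
  have key := (((((hf1 _ hs).comp s hρ).mul hq).mul (hP s)).add
    (((hf _ hs).comp s hρ).mul hL)).add
    ((((hg1 _ hs).comp s hρ).mul hq).const_mul d)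
  refine (key.deriv.trans ?_)
  have hne := hs.1.ne'
  simp only [Function.comp, Pi.mul_apply, Pi.div_apply]
  field_simp
  ring

/-- The Laplacian of a degree-two angular mode with radial profile `u` plus a radial function. -/
lemma lap2_entry {u u1 u2 v v1 v2 : ℝ → ℝ}
    (hu : ∀ r ∈ Ioo (0:ℝ) 1, HasDerivAt u (u1 r) r)
    (hu1 : ∀ r ∈ Ioo (0:ℝ) 1, HasDerivAt u1 (u2 r) r)
    (hv : ∀ r ∈ Ioo (0:ℝ) 1, HasDerivAt v (v1 r) r)
    (hv1 : ∀ r ∈ Ioo (0:ℝ) 1, HasDerivAt v1 (v2 r) r)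
    (α β d x y r : ℝ) (hr : r = √(x ^ 2 + y ^ 2)) (hr0 : 0 < r) (hr1 : r < 1) :
    lap2 (fun a b => u √(a ^ 2 + b ^ 2) * (α * ((a / √(a ^ 2 + b ^ 2)) ^ 2
          - (b / √(a ^ 2 + b ^ 2)) ^ 2) + β * (a / √(a ^ 2 + b ^ 2) * (b / √(a ^ 2 + b ^ 2))))
        + d * v √(a ^ 2 + b ^ 2)) x y
      = (α * ((x / r) ^ 2 - (y / r) ^ 2) + β * (x / r * (y / r)))
          * (u2 r + u1 r / r - 4 * u r / r ^ 2)
        + d * (v2 r + v1 r / r) := by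
  -- the profile in front of the polynomial `α (x² − y²) + β x y` is `f = u / r²`
  have hf : ∀ r ∈ Ioo (0:ℝ) 1, HasDerivAt (fun r => u r / r ^ 2)
      (u1 r / r ^ 2 - 2 * u r / r ^ 3) r := fun r hr => by
    have h0 := hr.1.ne'
    refine ((hu r hr).div (hasDerivAt_pow 2 r) (pow_ne_zero 2 h0)).congr_deriv ?_
    field_simp
    norm_num
    ring
  have hf1 : ∀ r ∈ Ioo (0:ℝ) 1, HasDerivAt (fun r => u1 r / r ^ 2 - 2 * u r / r ^ 3)
      (u2 r / r ^ 2 - 4 * u1 r / r ^ 3 + 6 * u r / r ^ 4) r := fun r hr => by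
    have h0 := hr.1.ne'
    refine (((hu1 r hr).div (hasDerivAt_pow 2 r) (pow_ne_zero 2 h0)).sub
      (((hu r hr).const_mul 2).div (hasDerivAt_pow 3 r) (pow_ne_zero 3 h0))).congr_deriv ?_
    field_simp
    norm_num
    ring
  have hx : (fun t => u √(t ^ 2 + y ^ 2) * (α * ((t / √(t ^ 2 + y ^ 2)) ^ 2
          - (y / √(t ^ 2 + y ^ 2)) ^ 2) + β * (t / √(t ^ 2 + y ^ 2) * (y / √(t ^ 2 + y ^ 2))))
        + d * v √(t ^ 2 + y ^ 2))
      = fun t => u √(t ^ 2 + y ^ 2) / √(t ^ 2 + y ^ 2) ^ 2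
          * (α * t ^ 2 + (β * y) * t + -(α * y ^ 2)) + d * v √(t ^ 2 + y ^ 2) := by
    funext t; ring
  have hy : (fun t => u √(x ^ 2 + t ^ 2) * (α * ((x / √(x ^ 2 + t ^ 2)) ^ 2
          - (t / √(x ^ 2 + t ^ 2)) ^ 2) + β * (x / √(x ^ 2 + t ^ 2) * (t / √(x ^ 2 + t ^ 2))))
        + d * v √(x ^ 2 + t ^ 2))
      = fun t => u √(t ^ 2 + x ^ 2) / √(t ^ 2 + x ^ 2) ^ 2
          * (-α * t ^ 2 + (β * x) * t + α * x ^ 2) + d * v √(t ^ 2 + x ^ 2) := by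
    funext t; rw [add_comm (x ^ 2) (t ^ 2)]; ring
  have hr' : √(y ^ 2 + x ^ 2) = r := by rw [add_comm, hr]
  have hmem : r ∈ Ioo (0:ℝ) 1 := ⟨hr0, hr1⟩
  have hsq : r ^ 2 = x ^ 2 + y ^ 2 := by rw [hr, Real.sq_sqrt (by positivity)]
  unfold lap2
  rw [hx, hy, deriv_deriv_radial hf hf1 hv hv1 α (β * y) (-(α * y ^ 2)) d (y ^ 2) x (hr ▸ hmem),
    deriv_deriv_radial hf hf1 hv hv1 (-α) (β * x) (α * x ^ 2) d (x ^ 2) y (hr'.symm ▸ hmem),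
    hr', ← hr]
  -- eliminate `x²` so that both sides become equal as polynomials in `x`, `y`, `r`
  have hx2 : x ^ 2 = r ^ 2 - y ^ 2 := by linarith
  have hx3 : x ^ 3 = x * (r ^ 2 - y ^ 2) := by rw [← hx2]; ring
  have hx4 : x ^ 4 = (r ^ 2 - y ^ 2) ^ 2 := by rw [← hx2]; ring
  field_simp
  ring_nf
  simp only [hx2, hx3, hx4]
  ring

/-- the radially symmetric planar `(u,v)`-ansatz
`Q = (u/2)(n₁ ⊗ n₁ − m ⊗ m) + v (p ⊗ p − I/3)` is an `S₀`-valued solution of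
the Landau–de Gennes Euler–Lagrange system
`L ΔQ = (B²/(27C)) Q − B(Q² − (tr Q²/3) I) + C (tr Q²) Q`
on the punctured unit disc whenever `(u,v)` solve the stated ODE system. -/
theorem uv_ansatz_solves_EulerLagrange
    (L B C : ℝ) (hL : 0 < L) (hB : 0 < B) (hC : 0 < C)
    (u v : ℝ → ℝ)
    (hu_smooth : ContDiffOn ℝ (⊤ : ℕ∞) u (Ioo 0 1)) (hv_smooth : ContDiffOn ℝ (⊤ : ℕ∞) v (Ioo 0 1))
    (hODE_u : ∀ r ∈ Ioo (0:ℝ) 1,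
      deriv (deriv u) r + deriv u r / r - 4 * u r / r ^ 2
        = (u r / L) * (B ^ 2 / (27 * C) + (2/3) * B * v r
            + C * ((u r) ^ 2 / 2 + 2 * (v r) ^ 2 / 3)))
    (hODE_v : ∀ r ∈ Ioo (0:ℝ) 1,
      deriv (deriv v) r + deriv v r / r
        = (v r / L) * (B ^ 2 / (27 * C) - B * v r / 3
            + C * ((u r) ^ 2 / 2 + 2 * (v r) ^ 2 / 3))
          + (B / (4 * L)) * (u r) ^ 2)
    (Q : ℝ → ℝ → Matrix (Fin 3) (Fin 3) ℝ)
    (hQ : ∀ x y, Q x y =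
      (u (Real.sqrt (x ^ 2 + y ^ 2)) / 2) •
        (vecMulVec ![x / Real.sqrt (x ^ 2 + y ^ 2), y / Real.sqrt (x ^ 2 + y ^ 2), 0]
            ![x / Real.sqrt (x ^ 2 + y ^ 2), y / Real.sqrt (x ^ 2 + y ^ 2), 0]
          - vecMulVec ![-(y / Real.sqrt (x ^ 2 + y ^ 2)), x / Real.sqrt (x ^ 2 + y ^ 2), 0]
              ![-(y / Real.sqrt (x ^ 2 + y ^ 2)), x / Real.sqrt (x ^ 2 + y ^ 2), 0])
      + v (Real.sqrt (x ^ 2 + y ^ 2)) •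
          (vecMulVec ![0, 0, 1] ![(0:ℝ), 0, 1]
            - (1 / 3 : ℝ) • (1 : Matrix (Fin 3) (Fin 3) ℝ))) :
    ∀ x y : ℝ, 0 < Real.sqrt (x ^ 2 + y ^ 2) → Real.sqrt (x ^ 2 + y ^ 2) < 1 →
      (Q x y)ᵀ = Q x y ∧
      Matrix.trace (Q x y) = 0 ∧
      Matrix.trace (Q x y * Q x y)
        = (u (Real.sqrt (x ^ 2 + y ^ 2))) ^ 2 / 2
          + 2 * (v (Real.sqrt (x ^ 2 + y ^ 2))) ^ 2 / 3 ∧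
      (∀ i j : Fin 3,
        L * lap2 (fun a b => Q a b i j) x y
          = ((B ^ 2 / (27 * C)) • Q x y
              - B • (Q x y * Q x y
                  - (Matrix.trace (Q x y * Q x y) / 3) • (1 : Matrix (Fin 3) (Fin 3) ℝ))
              + (C * Matrix.trace (Q x y * Q x y)) • Q x y) i j) := by
  intro x y hr0 hr1
  have hQ' : ∀ a b, Q a b = ansatzMatrix (u √(a ^ 2 + b ^ 2)) (v √(a ^ 2 + b ^ 2))
      (a / √(a ^ 2 + b ^ 2)) (b / √(a ^ 2 + b ^ 2)) := fun a b => by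
    rw [hQ a b, ansatzMatrix_eq]
  have hd : ∀ f : ℝ → ℝ, ContDiffOn ℝ (⊤ : ℕ∞) f (Ioo 0 1) → ∀ r ∈ Ioo (0:ℝ) 1,
      HasDerivAt f (deriv f r) r := fun f hf r hr =>
    ((hf.differentiableOn (by simp)).differentiableAt (isOpen_Ioo.mem_nhds hr)).hasDerivAt
  have hd' : ∀ f : ℝ → ℝ, ContDiffOn ℝ (⊤ : ℕ∞) f (Ioo 0 1) →
      ContDiffOn ℝ (⊤ : ℕ∞) (deriv f) (Ioo 0 1) := fun f hf =>
    hf.deriv_of_isOpen isOpen_Ioo (by simp)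
  have hlap := fun α β d => lap2_entry (hd u hu_smooth) (hd _ (hd' u hu_smooth))
    (hd v hv_smooth) (hd _ (hd' v hv_smooth)) α β d x y _ rfl hr0 hr1
  rw [hODE_u _ ⟨hr0, hr1⟩, hODE_v _ ⟨hr0, hr1⟩] at hlap
  have hcs : (x / √(x ^ 2 + y ^ 2)) ^ 2 + (y / √(x ^ 2 + y ^ 2)) ^ 2 = 1 := by
    rw [div_pow, div_pow, ← add_div, Real.sq_sqrt (by positivity)]
    exact div_self (Real.sqrt_pos.1 hr0).ne'
  simp only [hQ']
  rw [trace_ansatzMatrix_sq _ _ _ _ hcs, ansatzMatrix_sq _ _ _ _ hcs]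
  refine ⟨?_, ?_, rfl, ?_⟩
  · ext i j
    fin_cases i <;> fin_cases j <;> simp [ansatzMatrix]
  · simp [Matrix.trace, Fin.sum_univ_three, ansatzMatrix]
    ring
  · have hL0 : L ≠ 0 := hL.ne'
    have hmode : ∀ (i j : Fin 3) (α β d : ℝ), (∀ p q c s : ℝ,
          ansatzMatrix p q c s i j = p * (α * (c ^ 2 - s ^ 2) + β * (c * s)) + d * q) →
        lap2 (fun a b => ansatzMatrix (u √(a ^ 2 + b ^ 2)) (v √(a ^ 2 + b ^ 2))
          (a / √(a ^ 2 + b ^ 2)) (b / √(a ^ 2 + b ^ 2)) i j) x y = _ := fun i j α β d h => by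
      simp only [h]
      exact hlap α β d
    -- coefficients of `u (c² − s²)`, `u c s` and `v` in each entry
    let α : Matrix (Fin 3) (Fin 3) ℝ := !![1 / 2, 0, 0; 0, -1 / 2, 0; 0, 0, 0]
    let β : Matrix (Fin 3) (Fin 3) ℝ := !![0, 1, 0; 1, 0, 0; 0, 0, 0]
    let d : Matrix (Fin 3) (Fin 3) ℝ := !![-1 / 3, 0, 0; 0, -1 / 3, 0; 0, 0, 2 / 3]
    intro i j
    rw [hmode i j (α i j) (β i j) (d i j) (by
      intro p q c s
      fin_cases i <;> fin_cases j <;> simp [ansatzMatrix, α, β, d] <;> ring)]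
    fin_cases i <;> fin_cases j <;>
      simp [ansatzMatrix, α, β, d] <;> field_simp <;> ring
end
end
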